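/- arXiv:2005.09269 — 3 statements merged into one kernel-verified Lean document; each statement's English description precedes it below -/
import Mathlib

section
/- Let H = {rrb} (the single pattern consisting of a triangle with two red edges and one blue edge). Then for every positive integer n, h_2(n, H) = ⌈√n⌉. That is: every 3-edge-coloring of K_n containing no triangle with exactly two red edges and one blue edge has a set of at least ⌈√n⌉ vertices whose induced edges use at most two colors, and there exists such a coloring in which every set of vertices inducing at most two colors has size at most ⌈√n⌉. -/
/-- The three edge colors: red, blue, yellow. -/
inductive Col : Type
  | r | b | y
  deriving DecidableEq

/-- A (symmetric) 3-edge-coloring of the complete graph `K_n` on vertex set `Fin n`. -/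
structure Coloring (n : ℕ) where
  col : Fin n → Fin n → Col
  symm : ∀ i j, col i j = col j i

/-- The pattern (multiset of edge colors) of the triangle on vertices `u, v, w`. -/
def triPattern {n : ℕ} (c : Coloring n) (u v w : Fin n) : Multiset Col :=
  {c.col u v, c.col v w, c.col u w}

/-- The coloring `c` contains the pattern `P`: some triangle has color multiset `P`. -/
def Contains {n : ℕ} (c : Coloring n) (P : Multiset Col) : Prop :=
  ∃ u v w : Fin n, u ≠ v ∧ v ≠ w ∧ u ≠ w ∧ triPattern c u v w = P

/-- The coloring `c` avoids every pattern in the family `H`. -/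
def Avoids {n : ℕ} (c : Coloring n) (H : Set (Multiset Col)) : Prop :=
  ∀ P ∈ H, ¬ Contains c P

/-- A vertex set `S` is two-colored under `c`: the edges inside `S` use at most
two of the three colors, i.e. some color is missing on the edges inside `S`. -/
def TwoColored {n : ℕ} (c : Coloring n) (S : Finset (Fin n)) : Prop :=
  ∃ x : Col, ∀ i ∈ S, ∀ j ∈ S, i ≠ j → c.col i j ≠ x

/-- `h2 c` is the maximum size of a vertex set whose induced edges use at most
two of the three colors. -/
noncomputable def h2 {n : ℕ} (c : Coloring n) : ℕ :=
  sSup {k | ∃ S : Finset (Fin n), TwoColored c S ∧ S.card = k}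

/-- `h2n n H = min { h2 c : c a 3-edge-coloring of K_n avoiding all patterns in H }`. -/
noncomputable def h2n (n : ℕ) (H : Set (Multiset Col)) : ℕ :=
  sInf {m | ∃ c : Coloring n, Avoids c H ∧ h2 c = m}

/-- Pattern abbreviations. -/
def Prrr : Multiset Col := {Col.r, Col.r, Col.r}
def Pbbb : Multiset Col := {Col.b, Col.b, Col.b}
def Pyyy : Multiset Col := {Col.y, Col.y, Col.y}
def Prrb : Multiset Col := {Col.r, Col.r, Col.b}
def Prry : Multiset Col := {Col.r, Col.r, Col.y}
def Pbbr : Multiset Col := {Col.b, Col.b, Col.r}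
def Pbby : Multiset Col := {Col.b, Col.b, Col.y}
def Pyyr : Multiset Col := {Col.y, Col.y, Col.r}
def Pyyb : Multiset Col := {Col.y, Col.y, Col.b}
def Prby : Multiset Col := {Col.r, Col.b, Col.y}

theorem pat_cases (x y z : Col) (h : ({x, y, z} : Multiset Col) = Prrb) :
    (x = .r ∧ y = .r ∧ z = .b) ∨ (x = .r ∧ y = .b ∧ z = .r) ∨ (x = .b ∧ y = .r ∧ z = .r) := by
  revert h
  unfold Prrb
  cases x <;> cases y <;> cases z <;> decide

theorem h2_bdd {n : ℕ} (c : Coloring n) :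
    BddAbove {k | ∃ S : Finset (Fin n), TwoColored c S ∧ S.card = k} := by
  refine ⟨n, ?_⟩
  rintro k ⟨S, _, rfl⟩
  simpa using S.card_le_univ

theorem le_h2 {n : ℕ} (c : Coloring n) (S : Finset (Fin n)) (hS : TwoColored c S) :
    S.card ≤ h2 c := le_csSup (h2_bdd c) ⟨S, hS, rfl⟩

theorem h2_le {n : ℕ} (c : Coloring n) (m : ℕ)
    (h : ∀ S : Finset (Fin n), TwoColored c S → S.card ≤ m) : h2 c ≤ m := by
  refine csSup_le ⟨0, ∅, ⟨Col.r, by simp⟩, rfl⟩ ?_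
  rintro k ⟨S, hS, rfl⟩
  exact h S hS

/-- Greedy choice of a red-free set. -/
theorem greedy {n : ℕ} (c : Coloring n) (k : ℕ)
    (hk : ∀ v, (Finset.univ.filter (fun w => w = v ∨ c.col v w = .r)).card ≤ k)
    (A : Finset (Fin n)) :
    ∃ I ⊆ A, (∀ i ∈ I, ∀ j ∈ I, i ≠ j → c.col i j ≠ .r) ∧ A.card ≤ k * I.card := by
  induction A using Finset.strongInduction with
  | H A ih =>
    rcases A.eq_empty_or_nonempty with rfl | ⟨v, hv⟩
    · exact ⟨∅, by simp⟩
    · let N := Finset.univ.filter (fun w => w = v ∨ c.col v w = .r)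
      have hvN : v ∈ N := by simp [N]
      have hss : A \ N ⊂ A := by
        refine (Finset.ssubset_iff_of_subset Finset.sdiff_subset).2 ⟨v, hv, ?_⟩
        simp [hvN]
      obtain ⟨I, hIA, hI, hc⟩ := ih _ hss
      have hIN : ∀ i ∈ I, i ≠ v ∧ c.col v i ≠ .r := by
        intro i hi
        have := (Finset.mem_sdiff.1 (hIA hi)).2
        simpa [N] using this
      have hvI : v ∉ I := fun h => (hIN v h).1 rfl
      refine ⟨insert v I, ?_, ?_, ?_⟩
      · intro x hx
        rcases Finset.mem_insert.1 hx with rfl | hx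
        · exact hv
        · exact hss.1 (hIA hx)
      · intro i hi j hj hij
        rcases Finset.mem_insert.1 hi with hiv | hiI
        · rcases Finset.mem_insert.1 hj with hjv | hjI
          · exact absurd (hiv.trans hjv.symm) hij
          · rw [hiv]; exact (hIN j hjI).2
        · rcases Finset.mem_insert.1 hj with hjv | hjI
          · rw [c.symm, hjv]; exact (hIN i hiI).2
          · exact hI i hiI j hjI hij
      · rw [Finset.card_insert_of_notMem hvI]
        have h1 : A.card ≤ (A \ N).card + N.card := by
          have := Finset.le_card_sdiff N A
          omega
        have h2 : N.card ≤ k := hk v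
        rw [mul_add, mul_one]
        omega

theorem lower {n : ℕ} (c : Coloring n) (hc : Avoids c {Prrb}) : n ≤ h2 c * h2 c := by
  obtain ⟨I, -, hI, hcard⟩ := greedy c (h2 c) (by
    intro v
    apply le_h2
    refine ⟨.b, ?_⟩
    intro i hi j hj hij hb
    simp only [Finset.mem_filter, Finset.mem_univ, true_and] at hi hj
    by_cases hiv : i = v
    · subst hiv
      rcases hj with rfl | hj
      · exact hij rfl
      · rw [hj] at hb; cases hb
    by_cases hjv : j = v
    · subst hjv
      rcases hi with rfl | hi
      · exact hij rfl
      · rw [c.symm, hi] at hb; cases hb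
    have hi' := hi.resolve_left hiv
    have hj' := hj.resolve_left hjv
    refine hc Prrb rfl ⟨i, v, j, hiv, fun h => hjv h.symm, hij, ?_⟩
    unfold triPattern Prrb
    rw [c.symm i v, hi', hj', hb]) Finset.univ
  have := le_h2 c I ⟨.r, hI⟩
  calc n = (Finset.univ : Finset (Fin n)).card := by simp
    _ ≤ _ := hcard
    _ ≤ _ := Nat.mul_le_mul_left _ this

/-- The Latin square coloring. -/
def latin (n m : ℕ) : Coloring n where
  col i j := if i.val / m = j.val / m then .r else if i.val % m = j.val % m then .b else .y
  symm i j := by simp only [eq_comm]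

theorem latin_avoids (n m : ℕ) : Avoids (latin n m) {Prrb} := by
  rintro P rfl ⟨u, v, w, -, -, -, h⟩
  have := pat_cases _ _ _ h
  simp only [latin] at this
  grind

theorem latin_two (n m : ℕ) (hm : 0 < m) (hnm : n ≤ m * m) (S : Finset (Fin n))
    (hS : TwoColored (latin n m) S) : S.card ≤ m := by
  have key : ∀ f : Fin n → ℕ, (∀ i, f i < m) →
      (∀ i ∈ S, ∀ j ∈ S, f i = f j → i = j) → S.card ≤ m := by
    intro f hf hinj
    have := Finset.card_le_card_of_injOn (s := S) (t := Finset.range m) f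
      (fun i _ => by simpa using hf i) (fun i hi j hj h => hinj i hi j hj h)
    simpa using this
  have hdiv : ∀ i : Fin n, i.val / m < m := fun i =>
    Nat.div_lt_of_lt_mul (lt_of_lt_of_le i.2 hnm)
  have hmod : ∀ i : Fin n, i.val % m < m := fun i => Nat.mod_lt _ hm
  have hext : ∀ i j : Fin n, i.val / m = j.val / m → i.val % m = j.val % m → i = j := by
    intro i j h1 h2
    apply Fin.ext
    rw [← Nat.div_add_mod i.val m, ← Nat.div_add_mod j.val m, h1, h2]
  obtain ⟨x, hx⟩ := hS
  simp only [latin] at hx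
  cases x with
  | r =>
    refine key (fun i => i.val / m) hdiv ?_
    intro i hi j hj h
    by_contra hij
    exact hx i hi j hj hij (if_pos h)
  | b =>
    refine key (fun i => i.val % m) hmod ?_
    intro i hi j hj h
    by_contra hij
    apply hx i hi j hj hij
    rw [if_neg (fun h' => hij (hext i j h' h)), if_pos h]
  | y =>
    refine key (fun i => (i.val / m + i.val % m) % m) (fun i => Nat.mod_lt _ hm) ?_
    intro i hi j hj h
    by_contra hij
    have h : i.val / m + i.val % m ≡ j.val / m + j.val % m [MOD m] := h
    apply hx i hi j hj hij
    have n1 : ¬ i.val / m = j.val / m := by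
      intro h'
      rw [h'] at h
      have := Nat.ModEq.eq_of_lt_of_lt (Nat.ModEq.add_left_cancel' _ h) (hmod i) (hmod j)
      exact hij (hext i j h' this)
    have n2 : ¬ i.val % m = j.val % m := by
      intro h'
      rw [h'] at h
      exact n1 (Nat.ModEq.eq_of_lt_of_lt (Nat.ModEq.add_right_cancel' _ h) (hdiv i) (hdiv j))
    rw [if_neg n1, if_neg n2]

theorem ceil_le_iff (n k : ℕ) : ⌈Real.sqrt n⌉₊ ≤ k ↔ n ≤ k * k := by
  rw [Nat.ceil_le, Real.sqrt_le_left (by positivity), sq]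
  exact_mod_cast Iff.rfl

theorem stmt0 (n : ℕ) (hn : 0 < n) :
    h2n n {Prrb} = ⌈Real.sqrt n⌉₊ := by
  apply le_antisymm
  · have hnm := (ceil_le_iff n _).1 le_rfl
    have hm : 0 < ⌈Real.sqrt n⌉₊ := Nat.ceil_pos.2 (Real.sqrt_pos.2 (by exact_mod_cast hn))
    have hle : h2n n {Prrb} ≤ h2 (latin n ⌈Real.sqrt n⌉₊) :=
      Nat.sInf_le ⟨_, latin_avoids n ⌈Real.sqrt n⌉₊, rfl⟩
    exact hle.trans (h2_le _ _ (latin_two n _ hm hnm))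
  · refine le_csInf ⟨_, latin n 1, latin_avoids n 1, rfl⟩ ?_
    rintro m ⟨c, hc, rfl⟩
    exact (ceil_le_iff n _).2 (lower c hc)
end

section
/- Let H = {rrr} (the single pattern consisting of a monochromatic red triangle). Then h_2(n, H) = Θ(√(n log n)): there exist constants C1, C2 > 0 and an integer n0 such that for all n ≥ n0, C1·√(n·log n) ≤ h_2(n, H) ≤ C2·√(n·log n), where log denotes the base-2 logarithm. -/
namespace R3
open Finset
open scoped Classical

/-- weight of a subset in the p-random subset model -/
noncomputable def wt {E : Type} [Fintype E] (p : ℝ) (A : Finset E) : ℝ :=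
  (∏ _e ∈ A, p) * ∏ _e ∈ univ \ A, (1 - p)

/-- probability of an event in the p-random subset model -/
noncomputable def pr {E : Type} [Fintype E] (p : ℝ) (P : Finset E → Prop) : ℝ :=
  ∑ A : Finset E, if P A then wt p A else 0

section
variable {E : Type} [Fintype E] {p : ℝ}

lemma wt_nonneg (h0 : 0 ≤ p) (h1 : p ≤ 1) (A : Finset E) : 0 ≤ wt p A := by
  unfold wt
  exact mul_nonneg (prod_nonneg fun _ _ => h0) (prod_nonneg fun _ _ => by linarith)

lemma sum_wt : ∑ A : Finset E, wt p A = 1 := by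
  have := Finset.prod_add (fun _ : E => p) (fun _ => 1 - p) univ
  rw [powerset_univ] at this
  unfold wt
  rw [← this]; simp

lemma pr_nonneg (h0 : 0 ≤ p) (h1 : p ≤ 1) (P : Finset E → Prop) : 0 ≤ pr p P := by
  unfold pr
  refine sum_nonneg fun A _ => ?_
  split_ifs
  · exact wt_nonneg h0 h1 A
  · exact le_rfl

lemma pr_mono (h0 : 0 ≤ p) (h1 : p ≤ 1) {P Q : Finset E → Prop} (h : ∀ A, P A → Q A) :
    pr p P ≤ pr p Q := by
  unfold pr
  refine sum_le_sum fun A _ => ?_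
  have := wt_nonneg h0 h1 A
  split_ifs with a b b
  · exact le_rfl
  · exact absurd (h A a) b
  · exact this
  · exact le_rfl

lemma pr_exists_le {ι : Type} (h0 : 0 ≤ p) (h1 : p ≤ 1) (s : Finset ι)
    (P : ι → Finset E → Prop) :
    pr p (fun A => ∃ i ∈ s, P i A) ≤ ∑ i ∈ s, pr p (P i) := by
  unfold pr
  rw [sum_comm]
  refine sum_le_sum fun A _ => ?_
  have hw := wt_nonneg h0 h1 A
  have hn : ∀ i ∈ s, 0 ≤ (if P i A then wt p A else 0) := fun i _ => by
    split_ifs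
    · exact hw
    · exact le_rfl
  split_ifs with a
  · obtain ⟨i, hi, hP⟩ := a
    have := single_le_sum hn hi
    simpa [hP] using this
  · exact sum_nonneg hn

lemma pr_or_le (h0 : 0 ≤ p) (h1 : p ≤ 1) (P Q : Finset E → Prop) :
    pr p (fun A => P A ∨ Q A) ≤ pr p P + pr p Q := by
  unfold pr
  rw [← sum_add_distrib]
  refine sum_le_sum fun A _ => ?_
  have hw := wt_nonneg h0 h1 A
  by_cases a : P A <;> by_cases b : Q A <;> simp [a, b, hw]

lemma pr_subset (S : Finset E) : pr p (fun A => S ⊆ A) = p ^ S.card := by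
  have := Finset.prod_add (fun _ : E => p) (fun e => if e ∈ S then 0 else 1 - p) univ
  rw [powerset_univ] at this
  have h2 : ∀ e : E, (p + if e ∈ S then 0 else 1 - p) = if e ∈ S then p else 1 := by
    intro e; split_ifs <;> ring
  simp only [h2] at this
  rw [Finset.prod_ite] at this
  simp only [prod_const, one_pow, mul_one] at this
  rw [show (univ.filter fun e => e ∈ S) = S by ext; simp] at this
  rw [this]
  unfold pr
  refine sum_congr rfl fun A _ => ?_
  unfold wt
  split_ifs with h
  · congr 1
    · simp
    · refine prod_congr rfl fun e he => ?_
      have : e ∉ S := fun h' => (mem_sdiff.1 he).2 (h h')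
      simp [this]
  · obtain ⟨e, he, hA⟩ := not_subset.1 h
    symm
    apply mul_eq_zero_of_right
    apply prod_eq_zero (i := e) (by simp [hA])
    simp [he]

lemma pr_lower (h0 : 0 ≤ p) (h1 : p ≤ 1) (O : Finset E) (τ : ℕ) :
    pr p (fun A => (A ∩ O).card ≤ τ) ≤ 2 ^ τ * (1 - p / 2) ^ O.card := by
  have := Finset.prod_add (fun e : E => if e ∈ O then p / 2 else p) (fun _ => 1 - p) univ
  rw [powerset_univ] at this
  have h2 : ∀ e : E, ((if e ∈ O then p / 2 else p) + (1 - p)) = if e ∈ O then 1 - p / 2 else 1 := by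
    intro e; split_ifs <;> ring
  simp only [h2] at this
  rw [Finset.prod_ite] at this
  simp only [prod_const, one_pow, mul_one] at this
  rw [show (univ.filter fun e => e ∈ O) = O by ext; simp] at this
  rw [this, mul_sum]
  unfold pr
  refine sum_le_sum fun A _ => ?_
  have key : (∏ e ∈ A, if e ∈ O then p / 2 else p) = (1/2) ^ (A ∩ O).card * ∏ _e ∈ A, p := by
    have : ∀ e : E, (if e ∈ O then p / 2 else p) = (if e ∈ O then (1/2 : ℝ) else 1) * p := by
      intro e; split_ifs <;> ring
    simp only [this]
    rw [prod_mul_distrib, prod_ite]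
    simp [filter_mem_eq_inter]
  rw [key]
  have hw := wt_nonneg h0 h1 A
  have e1 : (2:ℝ) ^ τ * ((1/2) ^ (A ∩ O).card * (∏ _e ∈ A, p) * (1 - p) ^ (univ \ A).card)
      = 2 ^ τ * (1/2) ^ (A ∩ O).card * wt p A := by
    unfold wt; rw [prod_const (1-p)]; ring
  rw [e1]
  split_ifs with h
  · have : (1:ℝ) ≤ 2 ^ τ * (1/2) ^ (A ∩ O).card := by
      obtain ⟨c, hc⟩ := Nat.exists_eq_add_of_le h
      have e2 : (2:ℝ) ^ (A ∩ O).card * (1/2) ^ (A ∩ O).card = 1 := by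
        rw [← mul_pow]; norm_num
      have h3 : (2:ℝ) ^ τ * (1/2) ^ (A ∩ O).card = 2 ^ c := by
        calc (2:ℝ) ^ τ * (1/2) ^ (A ∩ O).card
            = 2 ^ ((A ∩ O).card + c) * (1/2) ^ (A ∩ O).card := by rw [← hc]
          _ = ((2:ℝ) ^ (A ∩ O).card * (1/2) ^ (A ∩ O).card) * 2 ^ c := by rw [pow_add]; ring
          _ = 2 ^ c := by rw [e2, one_mul]
      rw [h3]
      exact one_le_pow₀ (by norm_num)
    nlinarith
  · positivity

lemma pr_choose (h0 : 0 ≤ p) (h1 : p ≤ 1) (O : Finset E) (k : ℕ) :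
    pr p (fun A => k ≤ (A ∩ O).card) ≤ (O.card.choose k : ℝ) * p ^ k := by
  calc pr p (fun A => k ≤ (A ∩ O).card)
      ≤ pr p (fun A => ∃ S ∈ O.powersetCard k, S ⊆ A) := by
        refine pr_mono h0 h1 fun A h => ?_
        obtain ⟨S, hS, hc⟩ := exists_subset_card_eq h
        refine ⟨S, mem_powersetCard.2 ⟨hS.trans inter_subset_right, hc⟩, hS.trans inter_subset_left⟩
    _ ≤ ∑ S ∈ O.powersetCard k, pr p (fun A => S ⊆ A) := pr_exists_le h0 h1 _ _
    _ = ∑ S ∈ O.powersetCard k, p ^ k := by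
        refine sum_congr rfl fun S hS => ?_
        rw [pr_subset, (mem_powersetCard.1 hS).2]
    _ = _ := by simp

lemma pr_lower' [DecidableEq E] (h0 : 0 ≤ p) (h1 : p ≤ 1) (O : Finset E) (τ : ℕ) :
    pr p (fun A => (A ∩ O).card ≤ τ) ≤ 2 ^ τ * (1 - p / 2) ^ O.card := by
  convert pr_lower h0 h1 O τ

lemma pr_choose' [DecidableEq E] (h0 : 0 ≤ p) (h1 : p ≤ 1) (O : Finset E) (k : ℕ) :
    pr p (fun A => k ≤ (A ∩ O).card) ≤ (O.card.choose k : ℝ) * p ^ k := by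
  convert pr_choose h0 h1 O k

lemma choose_mul_pow_le (N k : ℕ) (h0 : 0 ≤ p) :
    (N.choose k : ℝ) * p ^ k ≤ (3 * N * p / k) ^ k := by
  rcases Nat.eq_zero_or_pos k with rfl | hk
  · simp
  have hk' : (0:ℝ) < k := by exact_mod_cast hk
  have a : (N.choose k : ℝ) ≤ (N:ℝ) ^ k / k.factorial := Nat.choose_le_pow_div k N
  have b : (k:ℝ) ^ k / k.factorial ≤ Real.exp k := Real.pow_div_factorial_le_exp _ hk'.le k
  have c : Real.exp k ≤ 3 ^ k := by
    rw [← Real.exp_one_pow]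
    exact pow_le_pow_left₀ (Real.exp_pos 1).le (Real.exp_one_lt_three.le) k
  have hf : (0:ℝ) < k.factorial := by exact_mod_cast k.factorial_pos
  have d : (1:ℝ) / k.factorial ≤ 3 ^ k / (k:ℝ) ^ k := by
    rw [le_div_iff₀ (by positivity)]
    calc _ = (k:ℝ) ^ k / k.factorial := by ring
      _ ≤ _ := b.trans c
  calc (N.choose k : ℝ) * p ^ k ≤ (N:ℝ) ^ k / k.factorial * p ^ k := by gcongr
    _ = (N:ℝ)^k * p ^ k * (1 / k.factorial) := by ring
    _ ≤ (N:ℝ)^k * p ^ k * (3 ^ k / (k:ℝ) ^ k) := by gcongr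
    _ = _ := by rw [div_pow, mul_pow, mul_pow]; ring

/-- two-sample existence lemma -/
lemma exists_two (h0 : 0 ≤ p) (h1 : p ≤ 1) (G : Finset E → Prop)
    (X : Finset E → Finset E → Prop) (hG : pr p (fun A => ¬ G A) ≤ 1/5)
    (hX : ∀ A, G A → pr p (fun B => ¬ X A B) ≤ 1/5) :
    ∃ A B, G A ∧ G B ∧ X A B ∧ X B A := by
  by_contra hcon
  push Not at hcon
  have hw := fun A : Finset E => wt_nonneg h0 h1 A
  have tot : ∑ A : Finset E, ∑ B : Finset E, wt p A * wt p B = 1 := by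
    simp only [← mul_sum, sum_wt, mul_one]
  have hle : ∀ A B : Finset E, wt p A * wt p B ≤
      (if ¬ G A then wt p A else 0) * wt p B + wt p A * (if ¬ G B then wt p B else 0)
      + (if G A then wt p A else 0) * (if ¬ X A B then wt p B else 0)
      + (if G B then wt p B else 0) * (if ¬ X B A then wt p A else 0) := by
    intro A B
    have hA := hw A
    have hB := hw B
    have := mul_nonneg hA hB
    have h4 := hcon A B
    by_cases a : G A <;> by_cases b : G B <;> by_cases c : X A B <;> by_cases d : X B A <;>
      simp only [a, b, c, d, if_true, if_false, not_true, not_false_iff] <;>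
      first
        | nlinarith
        | exact absurd d (h4 a b c)
  have s1 : ∑ A : Finset E, ∑ B : Finset E, (if ¬ G A then wt p A else 0) * wt p B ≤ 1/5 := by
    simp only [← mul_sum, sum_wt, mul_one]; unfold pr at hG; convert hG
  have s2 : ∑ A : Finset E, ∑ B : Finset E, wt p A * (if ¬ G B then wt p B else 0) ≤ 1/5 := by
    simp only [← mul_sum]
    rw [← sum_mul, sum_wt, one_mul]; unfold pr at hG; convert hG
  have s3 : ∑ A : Finset E, ∑ B : Finset E,
      (if G A then wt p A else 0) * (if ¬ X A B then wt p B else 0) ≤ 1/5 := by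
    simp only [← mul_sum]
    calc _ ≤ ∑ A : Finset E, wt p A * (1/5) := by
          refine sum_le_sum fun A _ => ?_
          split_ifs with h
          · have hXA := hX A h
            unfold pr at hXA
            refine mul_le_mul_of_nonneg_left ((le_of_eq ?_).trans hXA) (hw A)
            refine sum_congr rfl fun B _ => ?_
            congr
          · rw [zero_mul]; exact mul_nonneg (hw A) (by norm_num)
      _ = 1/5 := by rw [← sum_mul, sum_wt, one_mul]
  have s4 : ∑ A : Finset E, ∑ B : Finset E,
      (if G B then wt p B else 0) * (if ¬ X B A then wt p A else 0) ≤ 1/5 := by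
    rw [sum_comm]; exact s3
  have := sum_le_sum fun A (_ : A ∈ (univ : Finset (Finset E))) =>
    sum_le_sum fun B (_ : B ∈ (univ : Finset (Finset E))) => hle A B
  simp only [sum_add_distrib] at this
  rw [tot] at this
  linarith

lemma exists_of_pr (P : Finset E → Prop) (h : pr p (fun A => ¬ P A) < 1) : ∃ A, P A := by
  by_contra hcon
  push Not at hcon
  have : pr p (fun A : Finset E => ¬ P A) = 1 := by
    unfold pr; simp [hcon, sum_wt]
  linarith

end
end R3

namespace R3
open Finset
open scoped Classical

section
variable {m : ℕ}

/-- adjacency in the graph encoded by a set of pairs -/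
def adj (A : Finset (Fin m × Fin m)) (x y : Fin m) : Prop := x ≠ y ∧ (min x y, max x y) ∈ A

lemma adj_symm {A : Finset (Fin m × Fin m)} {x y : Fin m} (h : adj A x y) : adj A y x :=
  ⟨h.1.symm, by rw [min_comm, max_comm]; exact h.2⟩

lemma adj_mono {A B : Finset (Fin m × Fin m)} (h : A ⊆ B) {x y : Fin m} (hx : adj A x y) :
    adj B x y := ⟨hx.1, h hx.2⟩

def Sparse (A : Finset (Fin m × Fin m)) (K L : ℕ) : Prop :=
  ∀ a, 1 ≤ a → a ≤ L → ∀ X Y : Finset (Fin m), X.card = a → Y.card = a →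
    (A ∩ X ×ˢ Y).card < K * a

def DegLe (A : Finset (Fin m × Fin m)) (D : ℕ) : Prop :=
  ∀ x, (A ∩ {x} ×ˢ univ).card ≤ D ∧ (A ∩ univ ×ˢ {x}).card ≤ D

noncomputable def pairs (Q : Finset (Fin m)) : Finset (Fin m × Fin m) :=
  (Q ×ˢ Q).filter (fun e => e.1 < e.2)

noncomputable def tris (m : ℕ) : Finset (Finset (Fin m × Fin m)) :=
  ((univ : Finset (Fin m)).powersetCard 3).image pairs

def Kriv (A : Finset (Fin m × Fin m)) (l τ : ℕ) : Prop :=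
  ∀ Q : Finset (Fin m), Q.card = l → ∀ S : Finset (Finset (Fin m × Fin m)), S ⊆ tris m →
    (∀ T ∈ S, (T ∩ pairs Q).Nonempty) → (∀ T ∈ S, ∀ T' ∈ S, T ≠ T' → Disjoint T T') →
    (∀ T ∈ S, T ⊆ A) → S.card < τ

noncomputable def dJ (A J : Finset (Fin m × Fin m)) (x : Fin m) : ℕ :=
  (J.filter fun u => adj A x u.1).card

noncomputable def eG (A : Finset (Fin m × Fin m)) (X Y : Finset (Fin m)) : ℕ :=
  ((X ×ˢ Y).filter fun e => adj A e.1 e.2).card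

noncomputable def openPairs (A J : Finset (Fin m × Fin m)) : Finset (Fin m × Fin m) :=
  (pairs (J.image Prod.snd)).filter (fun e => ∀ u ∈ J, ∀ w ∈ J, u.2 = e.1 → w.2 = e.2 →
    ∀ z, ¬ (adj A z u.1 ∧ adj A z w.1))

def Cross (l s τ : ℕ) (A B : Finset (Fin m × Fin m)) : Prop :=
  ∀ J : Finset (Fin m × Fin m), J.card = l → (∀ x, (J.filter fun u => u.1 = x).card ≤ s) →
    (∀ u ∈ J, ∀ w ∈ J, u.2 = w.2 → u = w) → 3 * τ < (B ∩ openPairs A J).card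

lemma card_pairs (Q : Finset (Fin m)) : 2 * (pairs Q).card + Q.card = Q.card * Q.card := by
  have h1 : (pairs Q).card = ((Q ×ˢ Q).filter (fun e => e.2 < e.1)).card := by
    unfold pairs
    refine card_bij (fun e _ => e.swap) ?_ ?_ ?_
    · intro e he; simp at he ⊢; tauto
    · intro a _ b _ h; exact Prod.swap_injective h
    · intro e he; refine ⟨e.swap, ?_, by simp⟩; simp at he ⊢; tauto
  have h2 : Q.card = ((Q ×ˢ Q).filter (fun e => e.1 = e.2)).card := by
    refine card_bij (fun x _ => (x, x)) ?_ ?_ ?_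
    · intro e he; simpa using he
    · intro a _ b _ h; simpa using h
    · rintro ⟨x, y⟩ he; simp at he; refine ⟨x, he.1.1, ?_⟩; simp [he.2]
  rw [← card_product]
  have h3 : Q ×ˢ Q = pairs Q ∪ (((Q ×ˢ Q).filter (fun e => e.2 < e.1)) ∪
      ((Q ×ˢ Q).filter (fun e => e.1 = e.2))) := by
    ext ⟨x, y⟩
    simp [pairs]
    have := lt_trichotomy x y
    tauto
  have d1 : Disjoint ((Q ×ˢ Q).filter (fun e => e.2 < e.1))
      ((Q ×ˢ Q).filter (fun e => e.1 = e.2)) := by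
    rw [disjoint_filter]; intro e _ h1 h2; exact absurd h2 (ne_of_gt h1)
  have d2 : Disjoint (pairs Q) (((Q ×ˢ Q).filter (fun e => e.2 < e.1)) ∪
      ((Q ×ˢ Q).filter (fun e => e.1 = e.2))) := by
    unfold pairs
    rw [← filter_or, disjoint_filter]
    intro e _ h1 h2
    rcases h2 with h2 | h2
    · exact absurd h2 (not_lt.2 h1.le)
    · exact absurd h2 (ne_of_lt h1)
  rw [h3, card_union_of_disjoint d2, card_union_of_disjoint d1, ← h1, ← h2]
  omega

lemma card_tri {T : Finset (Fin m × Fin m)} (hT : T ∈ tris m) : T.card = 3 := by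
  unfold tris at hT
  obtain ⟨S, hS, rfl⟩ := mem_image.1 hT
  have := card_pairs S
  rw [(mem_powersetCard.1 hS).2] at this
  omega

lemma no_tri {A : Finset (Fin m × Fin m)} (h : ∀ T ∈ tris m, ¬ T ⊆ A) {x y z : Fin m}
    (h1 : adj A x y) (h2 : adj A y z) (h3 : adj A x z) : False := by
  refine h (pairs {x, y, z}) ?_ ?_
  · unfold tris
    refine mem_image_of_mem _ (mem_powersetCard.2 ⟨subset_univ _, ?_⟩)
    rw [card_eq_three]
    exact ⟨x, y, z, h1.1, h3.1, h2.1, rfl⟩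
  · have key : ∀ a b : Fin m, adj A a b → a < b → (a, b) ∈ A := by
      intro a b hab hlt
      have := hab.2
      rwa [min_eq_left hlt.le, max_eq_right hlt.le] at this
    rintro ⟨a, b⟩ hab
    simp only [pairs, mem_filter, mem_product, mem_insert, mem_singleton] at hab
    obtain ⟨⟨ha, hb⟩, hlt⟩ := hab
    have h1' := adj_symm h1
    have h2' := adj_symm h2
    have h3' := adj_symm h3
    apply key _ _ _ hlt
    rcases ha with rfl | rfl | rfl <;> rcases hb with rfl | rfl | rfl <;>
      first | assumption | exact absurd hlt (lt_irrefl _)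

lemma exists_trifree {A : Finset (Fin m × Fin m)} {l τ : ℕ} (hK : Kriv A l τ) :
    ∃ A' ⊆ A, (∀ T ∈ tris m, ¬ T ⊆ A') ∧ ∀ Q : Finset (Fin m), Q.card = l →
      ∀ O ⊆ pairs Q, 3 * τ < (A ∩ O).card → ∃ e ∈ O, e ∈ A' := by
  let fam : Finset (Finset (Finset (Fin m × Fin m))) := (tris m).powerset.filter fun S =>
    (∀ T ∈ S, ∀ T' ∈ S, T ≠ T' → Disjoint T T') ∧ (∀ T ∈ S, T ⊆ A)
  have hne : fam.Nonempty := ⟨∅, by simp [fam]⟩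
  obtain ⟨F, hF, hmax⟩ := exists_max_image fam card hne
  have hF' := hF
  simp only [fam, mem_filter, mem_powerset] at hF'
  obtain ⟨hFt, hFd, hFA⟩ := hF'
  refine ⟨A \ F.biUnion id, sdiff_subset, ?_, ?_⟩
  · intro T hT hTA
    have hdis : ∀ T' ∈ F, Disjoint T T' := by
      intro T' hT'
      rw [disjoint_left]
      intro e he he'
      exact (mem_sdiff.1 (hTA he)).2 (mem_biUnion.2 ⟨T', hT', he'⟩)
    have hnot : T ∉ F := by
      intro h
      have := hdis T h
      rw [disjoint_self_iff_empty] at this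
      have := card_tri hT
      simp_all
    have hins : insert T F ∈ fam := by
      simp only [fam, mem_filter, mem_powerset]
      refine ⟨insert_subset hT hFt, ?_, ?_⟩
      · intro a ha b hb hab
        rcases mem_insert.1 ha with rfl | ha' <;> rcases mem_insert.1 hb with rfl | hb'
        · exact absurd rfl hab
        · exact hdis b hb'
        · exact (hdis a ha').symm
        · exact hFd a ha' b hb' hab
      · intro a ha
        rcases mem_insert.1 ha with rfl | ha
        · exact hTA.trans sdiff_subset
        · exact hFA a ha
    have := hmax _ hins
    rw [card_insert_of_notMem hnot] at this
    omega
  · intro Q hQ O hO hc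
    by_contra hcon
    push Not at hcon
    let FQ := F.filter fun T => (T ∩ pairs Q).Nonempty
    have h1 : FQ.card < τ := by
      refine hK Q hQ FQ ((filter_subset _ _).trans hFt) ?_ ?_ ?_
      · intro T hT; exact (mem_filter.1 hT).2
      · intro a ha b hb; exact hFd a (mem_filter.1 ha).1 b (mem_filter.1 hb).1
      · intro a ha; exact hFA a (mem_filter.1 ha).1
    have h2 : A ∩ O ⊆ FQ.biUnion id := by
      intro e he
      obtain ⟨heA, heO⟩ := mem_inter.1 he
      have := hcon e heO
      rw [mem_sdiff] at this
      have h3 : e ∈ F.biUnion id := by tauto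
      obtain ⟨T, hT, heT⟩ := mem_biUnion.1 h3
      exact mem_biUnion.2 ⟨T, mem_filter.2 ⟨hT, e, mem_inter.2 ⟨heT, hO heO⟩⟩, heT⟩
    have h3 : (FQ.biUnion id).card ≤ FQ.card * 3 :=
      card_biUnion_le_card_mul _ _ _ fun T hT => (card_tri (hFt (mem_filter.1 hT).1)).le
    have := card_le_card h2
    omega

lemma eG_le (A : Finset (Fin m × Fin m)) (X Y : Finset (Fin m)) :
    eG A X Y ≤ (A ∩ X ×ˢ Y).card + (A ∩ Y ×ˢ X).card := by
  have h1 : (X ×ˢ Y).filter (fun e => adj A e.1 e.2) ⊆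
      (A ∩ X ×ˢ Y) ∪ (A ∩ Y ×ˢ X).image Prod.swap := by
    rintro ⟨x, y⟩ he
    simp only [mem_filter, mem_product] at he
    obtain ⟨⟨hx, hy⟩, hne, hA⟩ := he
    rcases le_total x y with h | h
    · rw [min_eq_left h, max_eq_right h] at hA
      exact mem_union_left _ (by simp [hx, hy, hA])
    · rw [min_eq_right h, max_eq_left h] at hA
      exact mem_union_right _ (by simp [hx, hy, hA])
  refine (card_le_card h1).trans ((card_union_le _ _).trans ?_)
  have := card_image_le (s := A ∩ Y ×ˢ X) (f := Prod.swap)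
  omega

lemma eG_sparse {A : Finset (Fin m × Fin m)} {K L : ℕ} (hS : Sparse A K L)
    {X Y : Finset (Fin m)} (h1 : 1 ≤ X.card) (hL : X.card ≤ L) (hXY : Y.card = X.card) :
    eG A X Y < 2 * K * X.card := by
  have := eG_le A X Y
  have a := hS X.card h1 hL X Y rfl hXY
  have b := hS X.card h1 hL Y X hXY rfl
  nlinarith

lemma eG_eq_sum_left (A : Finset (Fin m × Fin m)) (X Y : Finset (Fin m)) :
    eG A X Y = ∑ x ∈ X, (Y.filter fun y => adj A x y).card := by
  unfold eG
  simp only [card_filter, sum_product]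

lemma eG_eq_sum_right (A : Finset (Fin m × Fin m)) (X Y : Finset (Fin m)) :
    eG A X Y = ∑ y ∈ Y, (X.filter fun x => adj A x y).card := by
  rw [eG_eq_sum_left]
  simp only [card_filter]
  rw [sum_comm]

lemma eG_mono_right (A : Finset (Fin m × Fin m)) (X : Finset (Fin m)) {Y Y' : Finset (Fin m)}
    (h : Y ⊆ Y') : eG A X Y ≤ eG A X Y' :=
  card_le_card (filter_subset_filter _ (product_subset_product_right h))

lemma deg_le {A : Finset (Fin m × Fin m)} {D : ℕ} (hD : DegLe A D) (x : Fin m) :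
    (univ.filter fun y => adj A x y).card ≤ 2 * D := by
  have h := eG_le A {x} univ
  rw [eG_eq_sum_left, sum_singleton] at h
  have := hD x
  omega

/-- weighted degree sum over a small set -/
lemma sum_dJ_le {A J : Finset (Fin m × Fin m)} {K L s : ℕ} (hS : Sparse A K L) (hLm : L ≤ m)
    (hs : ∀ x, (J.filter fun u => u.1 = x).card ≤ s) (X : Finset (Fin m)) (hX : X.card ≤ L) :
    ∑ x ∈ X, dJ A J x ≤ 2 * K * J.card + s * (2 * K) * X.card := by
  rcases Nat.eq_zero_or_pos X.card with h0 | hpos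
  · rw [card_eq_zero] at h0; subst h0; simp
  let Y : Finset (Fin m) := univ.filter fun y => 2 * K < (X.filter fun x => adj A x y).card
  have hYX : Y.card ≤ X.card := by
    by_contra hcon
    push Not at hcon
    obtain ⟨Y', hY', hc⟩ := exists_subset_card_eq hcon.le
    have h1 := eG_sparse hS hpos hX hc
    rw [eG_eq_sum_right] at h1
    have h2 : ∑ y ∈ Y', 2 * K ≤ ∑ y ∈ Y', (X.filter fun x => adj A x y).card :=
      sum_le_sum fun y hy => (mem_filter.1 (hY' hy)).2.le
    rw [sum_const, hc, smul_eq_mul] at h2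
    nlinarith
  obtain ⟨Y', hYY', hc⟩ : ∃ Y', Y ⊆ Y' ∧ Y'.card = X.card := by
    obtain ⟨Z, h1, _, h3⟩ := exists_subsuperset_card_eq (subset_univ Y) hYX
      (by simpa using hX.trans hLm)
    exact ⟨Z, h1, h3⟩
  have hE : eG A X Y ≤ 2 * K * X.card :=
    (eG_mono_right A X hYY').trans (eG_sparse hS hpos hX hc).le
  have e1 : ∑ x ∈ X, dJ A J x = ∑ u ∈ J, (X.filter fun x => adj A x u.1).card := by
    unfold dJ
    simp only [card_filter]
    rw [sum_comm]
  rw [e1]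
  have e2 : ∀ u ∈ J, (X.filter fun x => adj A x u.1).card ≤
      2 * K + if u.1 ∈ Y then (X.filter fun x => adj A x u.1).card else 0 := by
    intro u _
    split_ifs with h
    · omega
    · simp only [Y, mem_filter, mem_univ, true_and, not_lt] at h
      omega
  have e3 : ∑ u ∈ J, (if u.1 ∈ Y then (X.filter fun x => adj A x u.1).card else 0) ≤
      s * (2 * K * X.card) := by
    rw [← sum_filter]
    have : ∑ u ∈ J.filter (fun u => u.1 ∈ Y), (X.filter fun x => adj A x u.1).card
        = ∑ y ∈ Y, ∑ u ∈ (J.filter (fun u => u.1 ∈ Y)).filter (fun u => u.1 = y),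
          (X.filter fun x => adj A x u.1).card := by
      rw [sum_fiberwise_of_maps_to]
      intro u hu; exact (mem_filter.1 hu).2
    rw [this]
    calc _ ≤ ∑ y ∈ Y, s * (X.filter fun x => adj A x y).card := by
          refine sum_le_sum fun y _ => ?_
          calc _ = ∑ u ∈ (J.filter (fun u => u.1 ∈ Y)).filter (fun u => u.1 = y),
                (X.filter fun x => adj A x y).card := by
                refine sum_congr rfl fun u hu => ?_
                rw [(mem_filter.1 hu).2]
            _ = ((J.filter (fun u => u.1 ∈ Y)).filter (fun u => u.1 = y)).card *
                (X.filter fun x => adj A x y).card := by rw [sum_const, smul_eq_mul]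
            _ ≤ _ := by
                gcongr
                refine le_trans (card_le_card ?_) (hs y)
                exact filter_subset_filter _ (filter_subset _ _)
      _ = s * eG A X Y := by rw [← mul_sum, eG_eq_sum_right]
      _ ≤ _ := by gcongr
  calc _ ≤ ∑ u ∈ J, (2 * K + if u.1 ∈ Y then (X.filter fun x => adj A x u.1).card else 0) :=
        sum_le_sum e2
    _ ≤ J.card * (2 * K) + s * (2 * K * X.card) := by
        rw [sum_add_distrib, sum_const, smul_eq_mul]; gcongr
    _ = _ := by ring

lemma dJ_total {A J : Finset (Fin m × Fin m)} {D : ℕ} (hD : DegLe A D) :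
    ∑ x, dJ A J x ≤ 2 * D * J.card := by
  have e1 : ∑ x, dJ A J x = ∑ u ∈ J, (univ.filter fun x => adj A x u.1).card := by
    unfold dJ
    simp only [card_filter]
    rw [sum_comm]
  rw [e1]
  calc _ ≤ ∑ u ∈ J, 2 * D := by
        refine sum_le_sum fun u _ => ?_
        refine le_trans (card_le_card ?_) (deg_le hD u.1)
        intro x hx
        simp only [mem_filter, mem_univ, true_and] at hx ⊢
        exact adj_symm hx
    _ = _ := by rw [sum_const, smul_eq_mul, mul_comm]

lemma dJ_max {A J : Finset (Fin m × Fin m)} {D s : ℕ} (hD : DegLe A D)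
    (hs : ∀ x, (J.filter fun u => u.1 = x).card ≤ s) (x : Fin m) :
    dJ A J x ≤ 2 * D * s := by
  unfold dJ
  have : J.filter (fun u => adj A x u.1) ⊆
      (univ.filter fun y => adj A x y).biUnion fun y => J.filter fun u => u.1 = y := by
    intro u hu
    simp only [mem_filter, mem_biUnion, mem_univ, true_and] at hu ⊢
    exact ⟨u.1, hu.2, hu.1, rfl⟩
  calc _ ≤ _ := card_le_card this
    _ ≤ (univ.filter fun y => adj A x y).card * s :=
        card_biUnion_le_card_mul _ _ _ fun y _ => hs y
    _ ≤ _ := by gcongr; exact deg_le hD x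

lemma sum_sq_le {A J : Finset (Fin m × Fin m)} {K L D s : ℕ} (hS : Sparse A K L) (hLm : L ≤ m)
    (hK1 : 1 ≤ K)
    (hD : DegLe A D) (hs : ∀ x, (J.filter fun u => u.1 = x).card ≤ s) (hJ : J.card < s * L) :
    ∑ x, dJ A J x ^ 2 ≤ 18 * K * D * s * J.card := by
  let T := 4 * s * K + 1
  let X : Finset (Fin m) := univ.filter fun x => T ≤ dJ A J x
  have key : ∀ X' ⊆ X, X'.card ≤ L → s * X'.card ≤ J.card := by
    intro X' hX' hL
    have h1 := sum_dJ_le hS hLm hs X' hL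
    have h2 : ∑ x ∈ X', T ≤ ∑ x ∈ X', dJ A J x :=
      sum_le_sum fun x hx => (mem_filter.1 (hX' hx)).2
    rw [sum_const, smul_eq_mul] at h2
    have h3 : X'.card * (4 * s * K + 1) ≤ 2 * K * J.card + s * (2 * K) * X'.card := h2.trans h1
    have h4 : (2 * K) * (s * X'.card) ≤ (2 * K) * J.card := by nlinarith
    exact Nat.le_of_mul_le_mul_left h4 (by omega)
  have hXL : X.card ≤ L := by
    by_contra hcon
    push Not at hcon
    obtain ⟨X', hX', hc⟩ := exists_subset_card_eq hcon.le
    have := key X' hX' hc.le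
    rw [hc] at this
    omega
  have hXs := key X subset_rfl hXL
  have h1 := sum_dJ_le hS hLm hs X hXL
  have hsplit : ∑ x, dJ A J x ^ 2 = ∑ x ∈ X, dJ A J x ^ 2 +
      ∑ x ∈ univ.filter (fun x => ¬ T ≤ dJ A J x), dJ A J x ^ 2 :=
    (sum_filter_add_sum_filter_not univ (fun x => T ≤ dJ A J x) _).symm
  rw [hsplit]
  have a1 : ∑ x ∈ X, dJ A J x ^ 2 ≤ (2 * D * s) * (4 * K * J.card) := by
    calc _ ≤ ∑ x ∈ X, (2 * D * s) * dJ A J x := by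
          refine sum_le_sum fun x _ => ?_
          rw [pow_two]
          exact Nat.mul_le_mul_right _ (dJ_max hD hs x)
      _ = (2 * D * s) * ∑ x ∈ X, dJ A J x := by rw [mul_sum]
      _ ≤ _ := by
          gcongr
          nlinarith
  have a2 : ∑ x ∈ univ.filter (fun x => ¬ T ≤ dJ A J x), dJ A J x ^ 2 ≤
      (4 * s * K) * (2 * D * J.card) := by
    calc _ ≤ ∑ x ∈ univ.filter (fun x => ¬ T ≤ dJ A J x), (4 * s * K) * dJ A J x := by
          refine sum_le_sum fun x hx => ?_
          rw [pow_two]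
          have := (mem_filter.1 hx).2
          exact Nat.mul_le_mul_right _ (by omega)
      _ ≤ ∑ x, (4 * s * K) * dJ A J x := sum_le_sum_of_subset (filter_subset _ _)
      _ = (4 * s * K) * ∑ x, dJ A J x := by rw [mul_sum]
      _ ≤ _ := by gcongr; exact dJ_total hD
  nlinarith [Nat.zero_le (K * D * s * J.card)]

lemma card_openPairs {A J : Finset (Fin m × Fin m)}
    (hinj : ∀ u ∈ J, ∀ w ∈ J, u.2 = w.2 → u = w) :
    J.card * J.card ≤ 2 * ((openPairs A J).card + ∑ x, dJ A J x ^ 2) + J.card := by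
  have hQ : (J.image Prod.snd).card = J.card :=
    card_image_of_injOn fun u hu w hw h => hinj u hu w hw h
  have h1 := card_pairs (J.image Prod.snd)
  rw [hQ] at h1
  have h2 : pairs (J.image Prod.snd) ⊆ openPairs A J ∪
      (univ.biUnion fun z => ((J.filter fun u => adj A z u.1) ×ˢ
        (J.filter fun u => adj A z u.1)).image fun q => (q.1.2, q.2.2)) := by
    intro e he
    by_cases ho : e ∈ openPairs A J
    · exact mem_union_left _ ho
    · apply mem_union_right
      unfold openPairs at ho
      rw [mem_filter] at ho
      push Not at ho
      obtain ⟨u, hu, w, hw, h1, h2, z, hz1, hz2⟩ := ho he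
      rw [mem_biUnion]
      refine ⟨z, mem_univ _, mem_image.2 ⟨(u, w), ?_, ?_⟩⟩
      · simp [hu, hw, hz1, hz2]
      · simp [h1, h2]
  have h3 := card_le_card h2
  have h4 : (univ.biUnion fun z => ((J.filter fun u => adj A z u.1) ×ˢ
        (J.filter fun u => adj A z u.1)).image fun q => (q.1.2, q.2.2)).card ≤
        ∑ z, dJ A J z ^ 2 := by
    refine card_biUnion_le.trans (sum_le_sum fun z _ => card_image_le.trans ?_)
    rw [card_product, pow_two]; rfl
  have h5 := card_union_le (openPairs A J) (univ.biUnion fun z =>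
    ((J.filter fun u => adj A z u.1) ×ˢ
        (J.filter fun u => adj A z u.1)).image fun q => (q.1.2, q.2.2))
  omega

/-- The deterministic construction. -/
theorem construct {A B V : Finset (Fin m × Fin m)} {l s τ K L : ℕ}
    (hA : Kriv A l τ) (hB : Kriv B l τ) (hAB : Cross l s τ A B) (hBA : Cross l s τ B A)
    (hV : DegLe V s) (hVS : Sparse V K L) (hl1 : 1 ≤ l) (hlL : l ≤ L) (hlm : l ≤ m) :
    ∃ G : Fin m × Fin m → Fin m × Fin m → Prop, (∀ u w, G u w → G w u) ∧
      (∀ u v w, G u v → G v w → G u w → False) ∧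
      ∀ I ⊆ V, K * l ≤ I.card → ∃ u ∈ I, ∃ w ∈ I, u ≠ w ∧ G u w := by
  obtain ⟨A', hA'A, hAtri, hAO⟩ := exists_trifree hA
  obtain ⟨B', hB'B, hBtri, hBO⟩ := exists_trifree hB
  refine ⟨fun u w => (adj A' u.1 w.1 ∧ ∀ z, ¬ (adj B z u.2 ∧ adj B z w.2)) ∨
    (adj B' u.2 w.2 ∧ ∀ z, ¬ (adj A z u.1 ∧ adj A z w.1)), ?_, ?_, ?_⟩
  · rintro u w (⟨h1, h2⟩ | ⟨h1, h2⟩)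
    · exact Or.inl ⟨adj_symm h1, fun z hz => h2 z hz.symm⟩
    · exact Or.inr ⟨adj_symm h1, fun z hz => h2 z hz.symm⟩
  · rintro u v w (⟨a1, a2⟩ | ⟨a1, a2⟩) (⟨b1, b2⟩ | ⟨b1, b2⟩) (⟨c1, c2⟩ | ⟨c1, c2⟩)
    · exact no_tri hAtri a1 b1 c1
    · exact c2 v.1 ⟨adj_symm (adj_mono hA'A a1), adj_mono hA'A b1⟩
    · exact b2 u.1 ⟨adj_mono hA'A a1, adj_mono hA'A c1⟩
    · exact a2 w.2 ⟨adj_symm (adj_mono hB'B c1), adj_symm (adj_mono hB'B b1)⟩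
    · exact a2 w.1 ⟨adj_symm (adj_mono hA'A c1), adj_symm (adj_mono hA'A b1)⟩
    · exact b2 u.2 ⟨adj_mono hB'B a1, adj_mono hB'B c1⟩
    · exact c2 v.2 ⟨adj_symm (adj_mono hB'B a1), adj_mono hB'B b1⟩
    · exact no_tri hBtri a1 b1 c1
  · intro I hIV hI
    have hfib1 : ∀ x, (I.filter fun u => u.1 = x).card ≤ s := fun x => by
      refine le_trans (card_le_card ?_) (hV x).1
      rintro ⟨a, b⟩ hab
      simp only [mem_filter] at hab
      have hmem := hIV hab.1
      obtain ⟨_, rfl⟩ := hab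
      simp [hmem]
    have hfib2 : ∀ x, (I.filter fun u => u.2 = x).card ≤ s := fun x => by
      refine le_trans (card_le_card ?_) (hV x).2
      rintro ⟨a, b⟩ hab
      simp only [mem_filter] at hab
      have hmem := hIV hab.1
      obtain ⟨_, rfl⟩ := hab
      simp [hmem]
    have htrans : ∀ f : Fin m × Fin m → Fin m, l ≤ (I.image f).card →
        ∃ J ⊆ I, J.card = l ∧ ∀ u ∈ J, ∀ w ∈ J, f u = f w → u = w := by
      intro f hf
      obtain ⟨Q, hQ, hQc⟩ := exists_subset_card_eq hf
      have : ∀ q : Fin m, ∃ u, q ∈ Q → u ∈ I ∧ f u = q := by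
        intro q
        by_cases hq : q ∈ Q
        · obtain ⟨u, hu, hfu⟩ := mem_image.1 (hQ hq)
          exact ⟨u, fun _ => ⟨hu, hfu⟩⟩
        · exact ⟨(q, q), fun h => absurd h hq⟩
      choose g hg using this
      refine ⟨Q.image g, ?_, ?_, ?_⟩
      · intro u hu
        obtain ⟨q, hq, rfl⟩ := mem_image.1 hu
        exact (hg q hq).1
      · rw [card_image_of_injOn, hQc]
        intro a ha b hb hab
        rw [← (hg a ha).2, ← (hg b hb).2, hab]
      · intro u hu w hw h
        obtain ⟨q, hq, rfl⟩ := mem_image.1 hu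
        obtain ⟨q', hq', rfl⟩ := mem_image.1 hw
        rw [(hg q hq).2, (hg q' hq').2] at h
        rw [h]
    have hcase : l ≤ (I.image Prod.fst).card ∨ l ≤ (I.image Prod.snd).card := by
      by_contra hcon
      push Not at hcon
      obtain ⟨X, hX, -, hXc⟩ := exists_subsuperset_card_eq (subset_univ (I.image Prod.fst))
        hcon.1.le (by simpa using hlm)
      obtain ⟨Y, hY, -, hYc⟩ := exists_subsuperset_card_eq (subset_univ (I.image Prod.snd))
        hcon.2.le (by simpa using hlm)
      have h1 := hVS l hl1 hlL X Y hXc hYc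
      have h2 : I ⊆ V ∩ X ×ˢ Y := by
        intro u hu
        rw [mem_inter, mem_product]
        exact ⟨hIV hu, hX (mem_image_of_mem _ hu), hY (mem_image_of_mem _ hu)⟩
      have := card_le_card h2
      omega
    rcases hcase with hc | hc
    · obtain ⟨J, hJI, hJc, hJi⟩ := htrans Prod.fst hc
      let J' := J.image Prod.swap
      have hJ'c : J'.card = l := by
        rw [card_image_of_injective _ Prod.swap_injective, hJc]
      have hcross := hBA J' hJ'c (by
        intro x
        refine le_trans ?_ (hfib2 x)
        refine card_le_card_of_injOn Prod.swap ?_ (Prod.swap_injective.injOn)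
        rintro ⟨a, b⟩ hab
        simp only [J', mem_image, coe_filter, Set.mem_ofPred_eq] at hab ⊢
        obtain ⟨⟨u, hu, h⟩, h2⟩ := hab
        have : u = (b, a) := by rw [← Prod.swap_swap u, h]; rfl
        subst this
        exact ⟨hJI hu, h2⟩) (by
        intro u hu w hw h
        obtain ⟨u', hu', rfl⟩ := mem_image.1 hu
        obtain ⟨w', hw', rfl⟩ := mem_image.1 hw
        rw [hJi u' hu' w' hw' h])
      obtain ⟨e, heO, heA⟩ := hAO (J'.image Prod.snd) (by
        rw [card_image_of_injOn, hJ'c]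
        intro u hu w hw h
        obtain ⟨u', hu', rfl⟩ := mem_image.1 hu
        obtain ⟨w', hw', rfl⟩ := mem_image.1 hw
        rw [hJi u' hu' w' hw' h]) (openPairs B J') (filter_subset _ _) hcross
      unfold openPairs at heO
      obtain ⟨hep, heop⟩ := mem_filter.1 heO
      simp only [pairs, mem_filter, mem_product] at hep
      obtain ⟨⟨h1, h2⟩, hlt⟩ := hep
      obtain ⟨u, hu, hue⟩ := mem_image.1 h1
      obtain ⟨w, hw, hwe⟩ := mem_image.1 h2
      have hop := heop u hu w hw hue hwe
      obtain ⟨u', hu', rfl⟩ := mem_image.1 hu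
      obtain ⟨w', hw', rfl⟩ := mem_image.1 hw
      simp only [Prod.snd_swap, Prod.fst_swap] at hue hwe hop
      refine ⟨u', hJI hu', w', hJI hw', ?_, Or.inl ⟨⟨?_, ?_⟩, hop⟩⟩
      · rintro rfl; rw [hue] at hwe; exact absurd hwe (ne_of_lt hlt)
      · rw [hue, hwe]; exact ne_of_lt hlt
      · rw [hue, hwe, min_eq_left hlt.le, max_eq_right hlt.le]; exact heA
    · obtain ⟨J, hJI, hJc, hJi⟩ := htrans Prod.snd hc
      have hcross := hAB J hJc (by
        intro x
        exact le_trans (card_le_card (filter_subset_filter _ hJI)) (hfib1 x)) hJi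
      obtain ⟨e, heO, heA⟩ := hBO (J.image Prod.snd) (by
        rw [card_image_of_injOn, hJc]
        intro u hu w hw h
        exact hJi u hu w hw h) (openPairs A J) (filter_subset _ _) hcross
      unfold openPairs at heO
      obtain ⟨hep, heop⟩ := mem_filter.1 heO
      simp only [pairs, mem_filter, mem_product] at hep
      obtain ⟨⟨h1, h2⟩, hlt⟩ := hep
      obtain ⟨u, hu, hue⟩ := mem_image.1 h1
      obtain ⟨w, hw, hwe⟩ := mem_image.1 h2
      have hop := heop u hu w hw hue hwe
      refine ⟨u, hJI hu, w, hJI hw, ?_, Or.inr ⟨⟨?_, ?_⟩, hop⟩⟩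
      · rintro rfl; rw [hue] at hwe; exact absurd hwe (ne_of_lt hlt)
      · rw [hue, hwe]; exact ne_of_lt hlt
      · rw [hue, hwe, min_eq_left hlt.le, max_eq_right hlt.le]; exact heA

end
end R3

namespace R3
open Finset
open scoped Classical

section
variable {m : ℕ} {p : ℝ}

lemma geom_le {δ : ℝ} (h0 : 0 ≤ δ) (h : δ ≤ 1/2) (L : ℕ) :
    ∑ a ∈ Icc 1 L, δ ^ a ≤ 2 * δ := by
  have : ∑ a ∈ Icc 1 L, δ ^ a + 2 * δ ^ (L + 1) ≤ 2 * δ := by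
    induction L with
    | zero => simp
    | succ n ih =>
      rw [sum_Icc_succ_top (by omega)]
      have : 0 ≤ δ ^ (n + 1) := pow_nonneg h0 _
      have e : δ ^ (n + 1 + 1) = δ ^ (n + 1) * δ := pow_succ _ _
      nlinarith
  have h2 : 0 ≤ δ ^ (L + 1) := pow_nonneg h0 _
  linarith

lemma pr_sparse (h0 : 0 ≤ p) (h1 : p ≤ 1) {K L : ℕ} (hK : 3 ≤ K)
    (hδ : (m:ℝ) ^ 2 * (L * p) ^ K ≤ 1/40) :
    pr p (fun A : Finset (Fin m × Fin m) => ¬ Sparse A K L) ≤ 1/20 := by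
  have hK0 : (0:ℝ) < K := by exact_mod_cast (by omega : 0 < K)
  calc pr p (fun A : Finset (Fin m × Fin m) => ¬ Sparse A K L)
      ≤ pr p (fun A : Finset (Fin m × Fin m) => ∃ a ∈ Icc 1 L,
          ∃ XY ∈ (powersetCard a (univ : Finset (Fin m))) ×ˢ (powersetCard a (univ : Finset (Fin m))),
          K * a ≤ (A ∩ XY.1 ×ˢ XY.2).card) := by
        refine pr_mono h0 h1 fun A hA => ?_
        unfold Sparse at hA
        push Not at hA
        obtain ⟨a, ha1, haL, X, Y, hX, hY, h⟩ := hA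
        refine ⟨a, mem_Icc.2 ⟨ha1, haL⟩, (X, Y), ?_, h⟩
        simp [mem_powersetCard, hX, hY]
    _ ≤ ∑ a ∈ Icc 1 L, pr p (fun A : Finset (Fin m × Fin m) =>
          ∃ XY ∈ (powersetCard a (univ : Finset (Fin m))) ×ˢ (powersetCard a (univ : Finset (Fin m))),
          K * a ≤ (A ∩ XY.1 ×ˢ XY.2).card) := pr_exists_le h0 h1 _ _
    _ ≤ ∑ a ∈ Icc 1 L, ((m:ℝ) ^ 2 * (L * p) ^ K) ^ a := by
        refine sum_le_sum fun a ha => ?_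
        obtain ⟨ha1, haL⟩ := mem_Icc.1 ha
        have ha0 : (0:ℝ) < a := by exact_mod_cast ha1
        refine (pr_exists_le h0 h1 _ _).trans ?_
        have hterm : ∀ XY ∈ (powersetCard a (univ : Finset (Fin m))) ×ˢ
            (powersetCard a (univ : Finset (Fin m))),
            pr p (fun A : Finset (Fin m × Fin m) => K * a ≤ (A ∩ XY.1 ×ˢ XY.2).card) ≤
            (L * p) ^ (K * a) := by
          intro XY hXY
          simp only [mem_product, mem_powersetCard] at hXY
          refine (pr_choose' h0 h1 _ _).trans ((choose_mul_pow_le _ _ h0).trans ?_)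
          refine pow_le_pow_left₀ (by positivity) ?_ _
          rw [card_product, hXY.1.2, hXY.2.2]
          push_cast
          rw [div_le_iff₀ (by positivity)]
          have haL' : (a:ℝ) ≤ L := by exact_mod_cast haL
          have hK3 : (3:ℝ) ≤ K := by exact_mod_cast hK
          have e1 : 3 * ((a:ℝ) * a) * p ≤ K * ((L:ℝ) * a) * p := by gcongr
          linarith
        refine (sum_le_card_nsmul _ _ _ hterm).trans ?_
        rw [card_product, card_powersetCard, card_univ, Fintype.card_fin, nsmul_eq_mul]
        have hc : (m.choose a : ℝ) ≤ (m:ℝ) ^ a := by exact_mod_cast Nat.choose_le_pow m a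
        push_cast
        rw [mul_pow ((m:ℝ) ^ 2), ← pow_mul, ← pow_mul, two_mul, pow_add]
        have : 0 ≤ ((L:ℝ) * p) ^ (K * a) := by positivity
        gcongr
    _ ≤ 2 * ((m:ℝ) ^ 2 * (L * p) ^ K) := geom_le (by positivity) (by linarith) _
    _ ≤ _ := by linarith

lemma pr_deg (h0 : 0 ≤ p) (h1 : p ≤ 1) {D : ℕ} (hD : 6 * m * p ≤ D + 1)
    (hm : 40 * (m:ℝ) ≤ 2 ^ (D + 1)) :
    pr p (fun A : Finset (Fin m × Fin m) => ¬ DegLe A D) ≤ 1/20 := by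
  have hbd : ∀ O : Finset (Fin m × Fin m), O.card = m →
      pr p (fun A : Finset (Fin m × Fin m) => D + 1 ≤ (A ∩ O).card) ≤ (1/2) ^ (D + 1) := by
    intro O hO
    refine (pr_choose' h0 h1 _ _).trans ((choose_mul_pow_le _ _ h0).trans ?_)
    refine pow_le_pow_left₀ (by positivity) ?_ _
    rw [hO, div_le_iff₀ (by positivity)]
    push_cast
    linarith
  calc pr p (fun A : Finset (Fin m × Fin m) => ¬ DegLe A D)
      ≤ pr p (fun A : Finset (Fin m × Fin m) => ∃ x ∈ (univ : Finset (Fin m)),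
        (D + 1 ≤ (A ∩ {x} ×ˢ univ).card ∨ D + 1 ≤ (A ∩ univ ×ˢ {x}).card)) := by
        refine pr_mono h0 h1 fun A hA => ?_
        unfold DegLe at hA
        push Not at hA
        obtain ⟨x, hx⟩ := hA
        refine ⟨x, mem_univ _, ?_⟩
        by_cases h : (A ∩ {x} ×ˢ univ).card ≤ D
        · exact Or.inr (hx h)
        · exact Or.inl (by omega)
    _ ≤ ∑ x : Fin m, ((1/2) ^ (D + 1) + (1/2) ^ (D + 1)) := by
        refine (pr_exists_le h0 h1 _ _).trans (sum_le_sum fun x _ => ?_)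
        refine (pr_or_le h0 h1 _ _).trans (add_le_add (hbd _ ?_) (hbd _ ?_)) <;> simp
    _ = 2 * m * (1/2) ^ (D + 1) := by simp; ring
    _ ≤ 1/20 := by
        rw [div_pow, one_pow, mul_one_div, div_le_iff₀ (by positivity)]
        linarith

lemma pr_kriv (h0 : 0 ≤ p) (h1 : p ≤ 1) {l τ : ℕ} :
    pr p (fun A : Finset (Fin m × Fin m) => ¬ Kriv A l τ) ≤
      (m:ℝ) ^ l * (3 * (l ^ 2 * m) * p ^ 3 / τ) ^ τ := by
  let TQ : Finset (Fin m) → Finset (Finset (Fin m × Fin m)) := fun Q =>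
    (tris m).filter fun T => (T ∩ pairs Q).Nonempty
  have hTQ : ∀ Q : Finset (Fin m), Q.card = l → (TQ Q).card ≤ l ^ 2 * m := by
    intro Q hQ
    have : TQ Q ⊆ ((Q ×ˢ Q) ×ˢ (univ : Finset (Fin m))).image
        fun q => pairs {q.1.1, q.1.2, q.2} := by
      intro T hT
      obtain ⟨hT, ⟨a, b⟩, he⟩ := mem_filter.1 hT
      unfold tris at hT
      obtain ⟨S, hS, rfl⟩ := mem_image.1 hT
      have hS3 := (mem_powersetCard.1 hS).2
      simp only [pairs, mem_inter, mem_filter, mem_product] at he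
      obtain ⟨⟨⟨haS, hbS⟩, hlt⟩, ⟨haQ, hbQ⟩, -⟩ := he
      have hsub : {a, b} ⊆ S := by
        intro x hx; simp at hx; rcases hx with rfl | rfl <;> assumption
      have h2 : ({a, b} : Finset (Fin m)).card = 2 := card_pair (ne_of_lt hlt)
      have : (S \ {a, b}).card = 1 := by rw [card_sdiff_of_subset hsub]; omega
      obtain ⟨c, hc⟩ := card_eq_one.1 this
      refine mem_image.2 ⟨((a, b), c), by simp [haQ, hbQ], ?_⟩
      congr 1
      rw [← sdiff_union_of_subset hsub, hc]
      ext x; simp; tauto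
    refine (card_le_card this).trans (card_image_le.trans ?_)
    rw [card_product, card_product, card_univ, Fintype.card_fin, hQ, pow_two]
  calc pr p (fun A : Finset (Fin m × Fin m) => ¬ Kriv A l τ)
      ≤ pr p (fun A : Finset (Fin m × Fin m) => ∃ Q ∈ powersetCard l (univ : Finset (Fin m)),
          ∃ S ∈ (powersetCard τ (TQ Q)).filter
            (fun S => ∀ T ∈ S, ∀ T' ∈ S, T ≠ T' → Disjoint T T'), S.biUnion id ⊆ A) := by
        refine pr_mono h0 h1 fun A hA => ?_
        unfold Kriv at hA
        push Not at hA
        obtain ⟨Q, hQ, S, hS, hne, hd, hSA, hτ⟩ := hA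
        obtain ⟨S', hS', hc⟩ := exists_subset_card_eq hτ
        refine ⟨Q, mem_powersetCard.2 ⟨subset_univ _, hQ⟩, S',
          mem_filter.2 ⟨mem_powersetCard.2 ⟨?_, hc⟩, ?_⟩, ?_⟩
        · intro T hT
          exact mem_filter.2 ⟨hS (hS' hT), hne T (hS' hT)⟩
        · intro T hT T' hT'
          exact hd T (hS' hT) T' (hS' hT')
        · exact biUnion_subset.2 fun T hT => hSA T (hS' hT)
    _ ≤ ∑ Q ∈ powersetCard l (univ : Finset (Fin m)), (3 * (l ^ 2 * m) * p ^ 3 / τ) ^ τ := by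
        refine (pr_exists_le h0 h1 _ _).trans (sum_le_sum fun Q hQ => ?_)
        have hQ' := (mem_powersetCard.1 hQ).2
        refine (pr_exists_le h0 h1 _ _).trans ?_
        have hterm : ∀ S ∈ (powersetCard τ (TQ Q)).filter
            (fun S => ∀ T ∈ S, ∀ T' ∈ S, T ≠ T' → Disjoint T T'),
            pr p (fun A : Finset (Fin m × Fin m) => S.biUnion id ⊆ A) ≤ (p ^ 3) ^ τ := by
          intro S hS
          obtain ⟨hS1, hS2⟩ := mem_filter.1 hS
          obtain ⟨hS3, hS4⟩ := mem_powersetCard.1 hS1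
          rw [pr_subset, card_biUnion (t := id) (fun T hT T' hT' hne => hS2 T hT T' hT' hne)]
          have : ∑ T ∈ S, (id T).card = ∑ T ∈ S, 3 := sum_congr rfl fun T hT =>
            card_tri (mem_filter.1 (hS3 hT)).1
          rw [this, sum_const, hS4, smul_eq_mul, mul_comm, pow_mul]
        refine (sum_le_card_nsmul _ _ _ hterm).trans ?_
        rw [nsmul_eq_mul]
        have hp3 : 0 ≤ p ^ 3 := by positivity
        refine le_trans ?_ (le_trans (choose_mul_pow_le (p := p ^ 3) (l ^ 2 * m) τ hp3) ?_)
        · gcongr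
          refine (card_filter_le _ _).trans ?_
          rw [card_powersetCard]
          exact Nat.choose_le_choose _ (hTQ Q hQ')
        · push_cast; exact le_rfl
    _ = (m.choose l : ℝ) * (3 * (l ^ 2 * m) * p ^ 3 / τ) ^ τ := by
        simp
    _ ≤ _ := by
        have hc : (m.choose l : ℝ) ≤ (m:ℝ) ^ l := by exact_mod_cast Nat.choose_le_pow m l
        gcongr

lemma pr_cross (h0 : 0 ≤ p) (h1 : p ≤ 1) {l s τ K L D : ℕ} {A : Finset (Fin m × Fin m)}
    (hS : Sparse A K L) (hLm : L ≤ m) (hK1 : 1 ≤ K) (hD : DegLe A D) (hl : l < s * L)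
    (hl2 : 2 ≤ l) (hbig : 8 * (18 * K * D * s) ≤ l) :
    pr p (fun B : Finset (Fin m × Fin m) => ¬ Cross l s τ A B) ≤
      ((m:ℝ) ^ 2) ^ l * (2 ^ (3 * τ) * Real.exp (- (p * l ^ 2 / 16))) := by
  let FJ : Finset (Finset (Fin m × Fin m)) := (powersetCard l univ).filter fun J =>
    (∀ x, (J.filter fun u => u.1 = x).card ≤ s) ∧ (∀ u ∈ J, ∀ w ∈ J, u.2 = w.2 → u = w)
  calc pr p (fun B : Finset (Fin m × Fin m) => ¬ Cross l s τ A B)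
      ≤ pr p (fun B : Finset (Fin m × Fin m) => ∃ J ∈ FJ, (B ∩ openPairs A J).card ≤ 3 * τ) := by
        refine pr_mono h0 h1 fun B hB => ?_
        unfold Cross at hB
        push Not at hB
        obtain ⟨J, hJ, hs, hi, h⟩ := hB
        exact ⟨J, mem_filter.2 ⟨mem_powersetCard.2 ⟨subset_univ _, hJ⟩, hs, hi⟩, h⟩
    _ ≤ ∑ J ∈ FJ, pr p (fun B : Finset (Fin m × Fin m) => (B ∩ openPairs A J).card ≤ 3 * τ) :=
        pr_exists_le h0 h1 _ _
    _ ≤ FJ.card • (2 ^ (3 * τ) * Real.exp (- (p * l ^ 2 / 16))) := by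
        refine sum_le_card_nsmul _ _ _ fun J hJ => ?_
        obtain ⟨hJ1, hs, hi⟩ := mem_filter.1 hJ
        have hJc := (mem_powersetCard.1 hJ1).2
        refine (pr_lower' h0 h1 _ _).trans ?_
        have hO : l ^ 2 ≤ 8 * (openPairs A J).card := by
          have a := card_openPairs (A := A) hi
          have b := sum_sq_le hS hLm hK1 hD hs (by rw [hJc]; exact hl)
          rw [hJc] at a b
          have c : 8 * (18 * K * D * s * l) ≤ l * l := by
            calc _ = (8 * (18 * K * D * s)) * l := by ring
              _ ≤ l * l := Nat.mul_le_mul_right _ hbig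
          nlinarith
        have hO' : (l:ℝ) ^ 2 ≤ 8 * (openPairs A J).card := by exact_mod_cast hO
        have : (1 - p / 2) ^ (openPairs A J).card ≤ Real.exp (- (p * l ^ 2 / 16)) := by
          calc (1 - p / 2) ^ (openPairs A J).card
              ≤ (Real.exp (-(p / 2))) ^ (openPairs A J).card := by
                refine pow_le_pow_left₀ (by linarith) ?_ _
                have := Real.add_one_le_exp (-(p / 2))
                linarith
            _ = Real.exp ((openPairs A J).card * (-(p / 2))) := by rw [Real.exp_nat_mul]
            _ ≤ _ := by
                apply Real.exp_le_exp.2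
                nlinarith
        gcongr
    _ ≤ _ := by
        rw [nsmul_eq_mul]
        have : (FJ.card : ℝ) ≤ ((m:ℝ) ^ 2) ^ l := by
          have h : FJ.card ≤ (m ^ 2) ^ l := by
            refine (card_filter_le _ _).trans ?_
            rw [card_powersetCard, card_univ, Fintype.card_prod, Fintype.card_fin, ← pow_two]
            exact Nat.choose_le_pow _ _
          exact_mod_cast h
        gcongr

lemma pr_card (h0 : 0 ≤ p) (h1 : p ≤ 1) {N : ℕ} (hN : 1 ≤ N) (h : 8 * (N:ℝ) ≤ p * m ^ 2) :
    pr p (fun A : Finset (Fin m × Fin m) => ¬ N ≤ A.card) ≤ 1/4 := by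
  calc pr p (fun A : Finset (Fin m × Fin m) => ¬ N ≤ A.card)
      ≤ pr p (fun A : Finset (Fin m × Fin m) => (A ∩ univ).card ≤ N) := by
        refine pr_mono h0 h1 fun A hA => ?_
        rw [inter_univ]; omega
    _ ≤ _ := pr_lower' h0 h1 _ _
    _ ≤ Real.exp N * Real.exp (-(4 * N)) := by
        gcongr
        · exact pow_nonneg (by linarith) _
        · rw [← Real.exp_one_pow]
          refine pow_le_pow_left₀ (by norm_num) ?_ _
          have := Real.add_one_le_exp (1:ℝ)
          linarith
        · rw [card_univ, Fintype.card_prod, Fintype.card_fin]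
          calc (1 - p / 2) ^ (m * m) ≤ (Real.exp (-(p / 2))) ^ (m * m) := by
                refine pow_le_pow_left₀ (by linarith) ?_ _
                have := Real.add_one_le_exp (-(p / 2))
                linarith
            _ = Real.exp ((m * m : ℕ) * (-(p / 2))) := by rw [Real.exp_nat_mul]
            _ ≤ _ := by
                apply Real.exp_le_exp.2
                push_cast
                nlinarith
    _ = Real.exp (-(3 * N)) := by rw [← Real.exp_add]; ring_nf
    _ ≤ 1/4 := by
        have hN' : (1:ℝ) ≤ N := by exact_mod_cast hN
        have h3 : (4:ℝ) ≤ Real.exp (3 * N) := by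
          have := Real.add_one_le_exp (3 * (N:ℝ))
          linarith
        rw [Real.exp_neg, inv_eq_one_div]
        exact one_div_le_one_div_of_le (by norm_num) h3
end
end R3

namespace R3
open Finset
open scoped Classical

lemma sparse_num {T y : ℝ} (hT : 40 ≤ T) (hy : y ^ 2 ≤ 1 / T) :
    (T ^ 7) ^ 2 * y ^ 30 ≤ 1/40 := by
  have hT0 : 0 < T := by linarith
  have h1 : y ^ 30 ≤ (1 / T) ^ 15 := by
    rw [show y ^ 30 = (y ^ 2) ^ 15 by ring]
    exact pow_le_pow_left₀ (by positivity) hy _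
  calc (T ^ 7) ^ 2 * y ^ 30 ≤ (T ^ 7) ^ 2 * (1 / T) ^ 15 := by gcongr
    _ = 1 / T := by field_simp
    _ ≤ 1 / 40 := one_div_le_one_div_of_le (by norm_num) hT

set_option maxHeartbeats 4000000 in
theorem main_graph (t g : ℕ) (ht : 40 ≤ t) (hlog : 1 ≤ Real.log t)
    (hx : (8000000 * Real.log t) ^ 2 ≤ t) (h2 : 40 * (t:ℝ) ^ 7 ≤ 2 ^ t)
    (hg1 : (t:ℝ) ^ 8 * Real.log t ≤ (g:ℝ) ^ 2) (hg2 : (g:ℝ) ^ 2 ≤ 4 * (t:ℝ) ^ 8 * Real.log t) :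
    ∃ V : Finset (Fin (t ^ 7) × Fin (t ^ 7)), t ^ 8 ≤ V.card ∧
      ∃ G : Fin (t ^ 7) × Fin (t ^ 7) → Fin (t ^ 7) × Fin (t ^ 7) → Prop,
        (∀ u w, G u w → G w u) ∧ (∀ u v w, G u v → G v w → G u w → False) ∧
        ∀ I ⊆ V, 60000000 * g ≤ I.card → ∃ u ∈ I, ∃ w ∈ I, u ≠ w ∧ G u w := by
  set T : ℝ := (t:ℝ) with hTdef
  set lam : ℝ := Real.log T with hlam
  set γ : ℝ := (g:ℝ) with hγ
  clear_value lam T γ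
  have hT : (40:ℝ) ≤ T := by rw [hTdef]; exact_mod_cast ht
  have hT0 : 0 < T := by linarith
  have hγ0 : 0 ≤ γ := by rw [hγ]; positivity
  have hTl : 64000000000000 * lam ≤ T := by nlinarith
  have hTbig : 64000000000000 ≤ T := by linarith
  have hγT : T ^ 4 ≤ γ := by
    refine (sq_le_sq₀ (by positivity) hγ0).1 ?_
    calc (T ^ 4) ^ 2 = T ^ 8 * 1 := by ring
      _ ≤ T ^ 8 * lam := by gcongr
      _ ≤ _ := hg1
  have hγpos : 0 < γ := lt_of_lt_of_le (by positivity) hγT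
  have hγ8 : 2000000 * γ ≤ T ^ 7 := by
    refine (sq_le_sq₀ (by positivity) (by positivity)).1 ?_
    have a : 16000000000000 * lam ≤ T ^ 6 := by
      calc 16000000000000 * lam ≤ T := by linarith
        _ ≤ T ^ 6 := le_self_pow₀ (by linarith) (by norm_num)
    calc (2000000 * γ) ^ 2 = 4000000000000 * γ ^ 2 := by ring
      _ ≤ 4000000000000 * (4 * T ^ 8 * lam) := by gcongr
      _ = T ^ 8 * (16000000000000 * lam) := by ring
      _ ≤ T ^ 8 * T ^ 6 := by gcongr
      _ = (T ^ 7) ^ 2 := by ring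
  -- x = 8000000 * lam / T
  have hx2 : (8000000 * lam / T) ^ 2 ≤ 1 / T := by
    rw [div_pow, div_le_div_iff₀ (by positivity) hT0]
    nlinarith
  have hx0 : 0 ≤ 8000000 * lam / T := by positivity
  have hx1 : 8000000 * lam / T ≤ 1 := by
    rw [div_le_one hT0]; linarith
  have hgg : γ ^ 2 / T ^ 9 ≤ 4 * lam / T := by
    rw [div_le_div_iff₀ (by positivity) hT0]
    calc γ ^ 2 * T ≤ (4 * T ^ 8 * lam) * T := by gcongr
      _ = _ := by ring
  -- parameters
  set m : ℕ := t ^ 7 with hm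
  have hmT : (m:ℝ) = T ^ 7 := by rw [hm, hTdef]; push_cast; rfl
  set l : ℕ := 2000000 * g with hl
  have hlR : (l:ℝ) = 2000000 * γ := by rw [hl, hγ]; push_cast; rfl
  set s : ℕ := 48 * t with hs
  have hsR : (s:ℝ) = 48 * T := by rw [hs, hTdef]; push_cast; rfl
  set L : ℕ := l / s + 1 with hL
  set D : ℕ := 6 * g / t with hD
  set p : ℝ := γ / T ^ 8 with hp
  set τ : ℕ := ⌈p * (l:ℝ) ^ 2 / 100⌉₊ with hτ
  have hp0 : 0 ≤ p := by positivity
  have hp1 : p ≤ 1 := by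
    rw [hp, div_le_one (by positivity)]
    calc γ ≤ 2000000 * γ := by linarith
      _ ≤ T ^ 7 := hγ8
      _ ≤ T ^ 8 := pow_le_pow_right₀ (by linarith) (by norm_num)
  have hg1' : 1 ≤ g := by
    have : (0:ℝ) < (g:ℝ) := hγ ▸ hγpos
    exact_mod_cast this
  have hl1 : 2 ≤ l := by omega
  have hs1 : 0 < s := by omega
  have hlm : l ≤ m := by
    have : (l:ℝ) ≤ m := by rw [hlR, hmT]; exact hγ8
    exact_mod_cast this
  have hlL : l < s * L := by
    rw [hL]; exact Nat.lt_mul_div_succ l hs1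
  have hLl : L ≤ l := by
    have : l / s ≤ l / 48 := Nat.div_le_div_left (by omega) (by norm_num)
    omega
  have hLR : (L:ℝ) ≤ 2000000 * γ / T := by
    have a : ((l / s : ℕ) : ℝ) ≤ (l:ℝ) / s := Nat.cast_div_le
    rw [hL]; push_cast
    rw [hlR, hsR] at a
    have b : (1:ℝ) ≤ γ / T := by
      rw [one_le_div hT0]
      calc T ≤ T ^ 4 := le_self_pow₀ (by linarith) (by norm_num)
        _ ≤ γ := hγT
    have c : 2000000 * γ / (48 * T) = (2000000 / 48) * (γ / T) := by field_simp
    have d : 2000000 * γ / T = 2000000 * (γ / T) := by ring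
    rw [c] at a; rw [d]; linarith
  have hLp : (L:ℝ) * p ≤ 8000000 * lam / T := by
    calc (L:ℝ) * p ≤ (2000000 * γ / T) * p := by gcongr
      _ = 2000000 * (γ ^ 2 / T ^ 9) := by rw [hp]; field_simp
      _ ≤ 2000000 * (4 * lam / T) := by gcongr
      _ = _ := by ring
  have hsparse : (m:ℝ) ^ 2 * (L * p) ^ 30 ≤ 1/40 := by
    rw [hmT]
    refine sparse_num hT (le_trans ?_ hx2)
    exact pow_le_pow_left₀ (by positivity) hLp _
  -- degrees
  have hDR : 6 * (m:ℝ) * p ≤ D + 1 := by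
    have : 6 * g < t * (D + 1) := by
      rw [hD]; exact Nat.lt_mul_div_succ _ (by omega)
    have h' : 6 * γ ≤ T * (D + 1) := by
      have : ((6 * g : ℕ):ℝ) ≤ ((t * (D + 1) : ℕ) : ℝ) := by exact_mod_cast this.le
      push_cast at this; rw [hγ, hTdef]; exact this
    have e : 6 * (m:ℝ) * p = 6 * γ / T := by rw [hmT, hp]; field_simp
    rw [e, div_le_iff₀ hT0]; linarith
  have htD : t ≤ D + 1 := by
    have : T ≤ D + 1 := by
      refine le_trans ?_ hDR
      have e : 6 * (m:ℝ) * p = 6 * γ / T := by rw [hmT, hp]; field_simp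
      rw [e, le_div_iff₀ hT0]
      calc T * T = T ^ 2 := by ring
        _ ≤ T ^ 4 := pow_le_pow_right₀ (by linarith) (by norm_num)
        _ ≤ γ := hγT
        _ ≤ 6 * γ := by linarith
    rw [hTdef] at this
    exact_mod_cast this
  have hpow : ∀ d : ℕ, t ≤ d → 40 * (m:ℝ) ≤ 2 ^ d := by
    intro d hd
    rw [hmT]
    exact h2.trans (pow_le_pow_right₀ (by norm_num) hd)
  -- p l
  have hpl : 2000000 * lam ≤ p * l := by
    rw [hp, hlR, div_mul_eq_mul_div, le_div_iff₀ (by positivity)]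
    nlinarith
  have hlpos : (0:ℝ) < l := by exact_mod_cast (by omega : 0 < l)
  have hl2R : (1:ℝ) ≤ l := by exact_mod_cast (by omega : 1 ≤ l)
  have hpl2 : 2000000 * lam * l ≤ p * (l:ℝ) ^ 2 := by
    calc 2000000 * lam * l ≤ p * l * l := by gcongr
      _ = _ := by ring
  have hpl2big : 2000000 ≤ p * (l:ℝ) ^ 2 := by nlinarith
  have hτ1 : p * (l:ℝ) ^ 2 / 100 ≤ τ := Nat.le_ceil _
  have hτ2 : (τ:ℝ) ≤ p * (l:ℝ) ^ 2 / 80 := by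
    have := (Nat.ceil_lt_add_one (by positivity : 0 ≤ p * (l:ℝ) ^ 2 / 100)).le
    have h : (τ:ℝ) ≤ p * (l:ℝ) ^ 2 / 100 + 1 := this
    linarith
  clear_value τ p m L D s l
  have hτpos : (0:ℝ) < τ := by linarith
  have hτ16 : 16 * l ≤ τ := by
    have : (16:ℝ) * l ≤ τ := by
      have : 1 * (l:ℝ) ≤ lam * l := by gcongr
      linarith
    exact_mod_cast this
  have hTl1 : T ^ l ≥ 40 := by
    calc T ^ l ≥ T := le_self_pow₀ (by linarith) (by omega)
      _ ≥ 40 := hT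
  -- Krivelevich estimate
  have hkriv : (m:ℝ) ^ l * (3 * (l ^ 2 * m) * p ^ 3 / τ) ^ τ ≤ 1/20 := by
    have b1 : 3 * ((l:ℝ) ^ 2 * m) * p ^ 3 / τ ≤ 8000000 * lam / T := by
      calc 3 * ((l:ℝ) ^ 2 * m) * p ^ 3 / τ ≤ 300 * (m * p ^ 2) := by
            rw [div_le_iff₀ hτpos]
            have : 0 ≤ 300 * (m * p ^ 2) := by positivity
            calc 3 * ((l:ℝ) ^ 2 * m) * p ^ 3 = 300 * (m * p ^ 2) * (p * (l:ℝ) ^ 2 / 100) := by ring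
              _ ≤ _ := by gcongr
        _ = 300 * (γ ^ 2 / T ^ 9) := by rw [hmT, hp]; field_simp
        _ ≤ 300 * (4 * lam / T) := by gcongr
        _ = 1200 * lam / T := by ring
        _ ≤ _ := by gcongr; norm_num
    calc (m:ℝ) ^ l * (3 * (l ^ 2 * m) * p ^ 3 / τ) ^ τ
        ≤ (m:ℝ) ^ l * (8000000 * lam / T) ^ τ := by gcongr
      _ ≤ (m:ℝ) ^ l * (8000000 * lam / T) ^ (16 * l) := by
          gcongr ?_ * ?_
          exact pow_le_pow_of_le_one hx0 hx1 hτ16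
      _ = (m:ℝ) ^ l * (((8000000 * lam / T) ^ 2) ^ 8) ^ l := by
          rw [← pow_mul, ← pow_mul, show 2 * (8 * l) = 16 * l by ring]
      _ ≤ (m:ℝ) ^ l * ((1 / T) ^ 8) ^ l := by gcongr
      _ = (T ^ 7 * (1 / T) ^ 8) ^ l := by rw [hmT, mul_pow]
      _ = (1 / T) ^ l := by congr 1; field_simp
      _ = 1 / T ^ l := by rw [div_pow, one_pow]
      _ ≤ 1 / 20 := one_div_le_one_div_of_le (by norm_num) (by linarith)
  -- cross estimate
  have hcross : ((m:ℝ) ^ 2) ^ l * (2 ^ (3 * τ) * Real.exp (- (p * l ^ 2 / 16))) ≤ 1/5 := by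
    have c1 : (2:ℝ) ^ (3 * τ) ≤ Real.exp (3 * (p * (l:ℝ) ^ 2 / 80)) := by
      calc (2:ℝ) ^ (3 * τ) ≤ (Real.exp 1) ^ (3 * τ) := by
            refine pow_le_pow_left₀ (by norm_num) ?_ _
            have := Real.add_one_le_exp (1:ℝ)
            linarith
        _ = Real.exp ((3 * τ : ℕ)) := by rw [Real.exp_one_pow]
        _ ≤ _ := by
            apply Real.exp_le_exp.2
            push_cast
            linarith
    have c2 : T ^ (15 * l) = Real.exp (15 * l * lam) := by
      rw [show (15 * (l:ℝ) * lam) = ((15 * l : ℕ) : ℝ) * lam by push_cast; ring,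
        Real.exp_nat_mul, hlam, Real.exp_log hT0]
    calc ((m:ℝ) ^ 2) ^ l * (2 ^ (3 * τ) * Real.exp (- (p * l ^ 2 / 16)))
        ≤ ((m:ℝ) ^ 2) ^ l * (Real.exp (3 * (p * (l:ℝ) ^ 2 / 80)) *
            Real.exp (- (p * l ^ 2 / 16))) := by gcongr
      _ = ((m:ℝ) ^ 2) ^ l * Real.exp (-(p * l ^ 2 / 40)) := by
          rw [← Real.exp_add]; congr 2; ring
      _ ≤ ((m:ℝ) ^ 2) ^ l * Real.exp (-(15 * l * lam)) := by
          gcongr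
          nlinarith [mul_nonneg hlpos.le (by linarith : (0:ℝ) ≤ lam)]
      _ = T ^ (14 * l) * (T ^ (15 * l))⁻¹ := by
          rw [Real.exp_neg, c2, hmT, ← pow_mul, ← pow_mul, show 7 * (2 * l) = 14 * l by ring]
      _ = 1 / T ^ l := by
          rw [show 15 * l = 14 * l + l by ring, pow_add]
          field_simp
      _ ≤ 1 / 5 := one_div_le_one_div_of_le (by norm_num) (by linarith)
  -- bound on closed pairs
  have hbig : 8 * (18 * 30 * D * s) ≤ l := by
    have : D * s ≤ 288 * g := by
      have : D * t ≤ 6 * g := by rw [hD]; exact Nat.div_mul_le_self _ _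
      calc D * s = 48 * (D * t) := by rw [hs]; ring
        _ ≤ 48 * (6 * g) := by gcongr
        _ = _ := by ring
    calc 8 * (18 * 30 * D * s) = 4320 * (D * s) := by ring
      _ ≤ 4320 * (288 * g) := by gcongr
      _ ≤ l := by rw [hl]; omega
  -- choose A and B
  obtain ⟨A, B, hA, hB, hAB, hBA⟩ := exists_two (E := Fin m × Fin m) hp0 hp1
    (fun A => Sparse A 30 L ∧ DegLe A D ∧ Kriv A l τ) (Cross l s τ) (by
      calc pr p (fun A : Finset (Fin m × Fin m) => ¬ (Sparse A 30 L ∧ DegLe A D ∧ Kriv A l τ))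
          ≤ pr p (fun A : Finset (Fin m × Fin m) => ¬ Sparse A 30 L ∨ (¬ DegLe A D ∨ ¬ Kriv A l τ)) :=
            pr_mono hp0 hp1 fun A h => by tauto
        _ ≤ 1/20 + (1/20 + 1/20) := by
            refine (pr_or_le hp0 hp1 _ _).trans (add_le_add ?_ ?_)
            · exact pr_sparse hp0 hp1 (by norm_num) hsparse
            · refine (pr_or_le hp0 hp1 _ _).trans (add_le_add ?_ ?_)
              · exact pr_deg hp0 hp1 hDR (hpow _ htD)
              · exact (pr_kriv hp0 hp1).trans hkriv
        _ ≤ 1/5 := by norm_num)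
    (fun A hA => (pr_cross hp0 hp1 hA.1 (hLl.trans hlm) (by norm_num) hA.2.1 hlL hl1 hbig).trans
      hcross)
  -- choose V
  set p' : ℝ := 8 / T ^ 6 with hp'
  have hp'0 : 0 ≤ p' := by positivity
  have hp'1 : p' ≤ 1 := by
    rw [hp', div_le_one (by positivity)]
    calc (8:ℝ) ≤ T := by linarith
      _ ≤ T ^ 6 := le_self_pow₀ (by linarith) (by norm_num)
  obtain ⟨V, hV1, hV2, hV3⟩ := exists_of_pr (E := Fin m × Fin m) (p := p')
    (fun V => t ^ 8 ≤ V.card ∧ Sparse V 30 l ∧ DegLe V s) (by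
      calc pr p' (fun A : Finset (Fin m × Fin m) => ¬ (t ^ 8 ≤ A.card ∧ Sparse A 30 l ∧ DegLe A s))
          ≤ pr p' (fun A : Finset (Fin m × Fin m) => ¬ t ^ 8 ≤ A.card ∨
              (¬ Sparse A 30 l ∨ ¬ DegLe A s)) :=
            pr_mono hp'0 hp'1 fun A h => by tauto
        _ ≤ 1/4 + (1/20 + 1/20) := by
            refine (pr_or_le hp'0 hp'1 _ _).trans (add_le_add ?_ ?_)
            · refine pr_card hp'0 hp'1 (Nat.one_le_pow _ _ (by omega)) ?_
              rw [hmT, hp']; push_cast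
              rw [← hTdef]
              apply le_of_eq
              field_simp
            · refine (pr_or_le hp'0 hp'1 _ _).trans (add_le_add ?_ ?_)
              · refine pr_sparse hp'0 hp'1 (by norm_num) ?_
                rw [hmT]
                refine sparse_num hT ?_
                rw [hlR, hp']
                have e : (2000000 * γ * (8 / T ^ 6)) ^ 2 = 256000000000000 * γ ^ 2 / T ^ 12 := by
                  field_simp; ring
                rw [e, div_le_div_iff₀ (by positivity) hT0]
                calc 256000000000000 * γ ^ 2 * T ≤ 256000000000000 * (4 * T ^ 8 * lam) * T := by
                      gcongr
                  _ = (16 * (64000000000000 * lam)) * T ^ 9 := by ring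
                  _ ≤ (T * T) * T ^ 9 := by
                      gcongr
                      nlinarith
                  _ = T ^ 11 := by ring
                  _ ≤ 1 * T ^ 12 := by
                      rw [one_mul]; exact pow_le_pow_right₀ (by linarith) (by norm_num)
              · refine pr_deg hp'0 hp'1 ?_ (hpow _ (by omega))
                have e : 6 * (m:ℝ) * p' = 48 * T := by rw [hmT, hp']; field_simp; norm_num
                rw [e, hsR]; linarith
        _ < 1 := by norm_num)
  obtain ⟨G, hG1, hG2, hG3⟩ := construct hA.2.2 hB.2.2 hAB hBA hV3 hV2 (by omega) le_rfl hlm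
  refine ⟨V, hV1, G, hG1, hG2, fun I hI hc => hG3 I hI ?_⟩
  omega

end R3

namespace R3
open Finset
open scoped Classical

lemma h2_le {n : ℕ} (c : Coloring n) (K : ℕ)
    (h : ∀ S : Finset (Fin n), TwoColored c S → S.card ≤ K) : h2 c ≤ K := by
  unfold h2
  apply csSup_le'
  rintro k ⟨S, hS, rfl⟩
  exact h S hS

lemma le_h2 {n : ℕ} (c : Coloring n) (S : Finset (Fin n)) (hS : TwoColored c S) :
    S.card ≤ h2 c := by
  unfold h2
  apply le_csSup
  · refine ⟨n, ?_⟩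
    rintro k ⟨S, -, rfl⟩
    simpa using Finset.card_le_univ S
  · exact ⟨S, hS, rfl⟩

lemma avoids_of {n : ℕ} (c : Coloring n)
    (h : ∀ u v w, c.col u v = Col.r → c.col v w = Col.r → c.col u w = Col.r → False) :
    Avoids c {Prrr} := by
  intro P hP
  rw [Set.mem_singleton_iff] at hP
  subst hP
  rintro ⟨u, v, w, -, -, -, hp⟩
  have key : ∀ x ∈ triPattern c u v w, x = Col.r := by
    rw [hp]; intro x hx; simpa [Prrr] using hx
  exact h u v w (key _ (by simp [triPattern])) (key _ (by simp [triPattern]))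
    (key _ (by simp [triPattern]))

lemma of_avoids {n : ℕ} (c : Coloring n) (h : Avoids c {Prrr}) (u v w : Fin n)
    (h1 : u ≠ v) (h2 : v ≠ w) (h3 : u ≠ w)
    (a1 : c.col u v = Col.r) (a2 : c.col v w = Col.r) (a3 : c.col u w = Col.r) : False :=
  h Prrr rfl ⟨u, v, w, h1, h2, h3, by simp [triPattern, Prrr, a1, a2, a3]⟩

lemma colour_of_graph {α : Type} (n K r : ℕ) (hr : n ≤ r * r) (V : Finset α) (hV : n ≤ V.card)
    (G : α → α → Prop) (hs : ∀ u w, G u w → G w u)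
    (ht : ∀ u v w, G u v → G v w → G u w → False)
    (hI : ∀ I ⊆ V, K ≤ I.card → ∃ u ∈ I, ∃ w ∈ I, u ≠ w ∧ G u w) :
    ∃ c : Coloring n, Avoids c {Prrr} ∧ h2 c ≤ max K (2 * r) := by
  have : Nonempty (Fin n ↪ V) := by
    apply Function.Embedding.nonempty_of_card_le
    simpa using hV
  obtain ⟨f⟩ := this
  let F : Fin n ↪ α := f.trans ⟨Subtype.val, Subtype.val_injective⟩
  have hF : ∀ i, F i ∈ V := fun i => (f i).2
  let c : Coloring n := ⟨fun i j => if G (F i) (F j) then Col.r else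
    if i.val / r = j.val / r then Col.y else Col.b, fun i j => by
      have : G (F i) (F j) ↔ G (F j) (F i) := ⟨hs _ _, hs _ _⟩
      simp only [this, eq_comm]⟩
  have hcr : ∀ i j, c.col i j = Col.r → G (F i) (F j) := by
    intro i j h
    by_contra hn
    simp only [c, hn, if_false] at h
    split_ifs at h
  have hcr' : ∀ i j, G (F i) (F j) → c.col i j = Col.r := by
    intro i j h
    simp only [c, h, if_true]
  have hcy : ∀ i j : Fin n, i.val / r = j.val / r → c.col i j ≠ Col.y → G (F i) (F j) := by
    intro i j h h'
    by_contra hn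
    simp only [c, hn, if_false, h, if_true] at h'
    exact h' rfl
  have hcb : ∀ i j : Fin n, i.val / r ≠ j.val / r → c.col i j ≠ Col.b → G (F i) (F j) := by
    intro i j h h'
    by_contra hn
    simp only [c, hn, if_false, h] at h'
    exact h' rfl
  refine ⟨c, avoids_of c fun u v w h1 h2 h3 => ht _ _ _ (hcr _ _ h1) (hcr _ _ h2) (hcr _ _ h3), ?_⟩
  have hrow : ∀ i : Fin n, i.val / r < r := fun i => Nat.div_lt_of_lt_mul (lt_of_lt_of_le i.2 hr)
  apply h2_le
  rintro S ⟨x, hx⟩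
  cases x with
  | r =>
    refine le_trans ?_ (le_max_left _ _)
    by_contra hlt
    push Not at hlt
    obtain ⟨u, hu, w, hw, huw, hG⟩ := hI (S.map F) (by
      intro a ha
      obtain ⟨i, -, rfl⟩ := Finset.mem_map.1 ha
      exact hF i) (by rw [Finset.card_map]; exact hlt.le)
    obtain ⟨i, hi, rfl⟩ := Finset.mem_map.1 hu
    obtain ⟨j, hj, rfl⟩ := Finset.mem_map.1 hw
    exact hx i hi j hj (fun e => huw (by rw [e])) (hcr' _ _ hG)
  | y =>
    refine le_trans ?_ (le_max_right _ _)
    refine (Finset.card_le_mul_card_image (f := fun i : Fin n => i.val / r) S 2 ?_).trans ?_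
    · intro a _
      by_contra hlt
      push Not at hlt
      obtain ⟨u, hu, v, hv, w, hw, h1, h2, h3⟩ := Finset.two_lt_card.1 hlt
      simp only [Finset.mem_filter] at hu hv hw
      refine ht (F u) (F v) (F w) ?_ ?_ ?_
      · exact hcy _ _ (hu.2.trans hv.2.symm) (hx _ hu.1 _ hv.1 h1)
      · exact hcy _ _ (hv.2.trans hw.2.symm) (hx _ hv.1 _ hw.1 h3)
      · exact hcy _ _ (hu.2.trans hw.2.symm) (hx _ hu.1 _ hw.1 h2)
    · gcongr
      calc _ ≤ (Finset.range r).card := by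
            apply Finset.card_le_card
            intro a ha
            obtain ⟨i, -, rfl⟩ := Finset.mem_image.1 ha
            exact Finset.mem_range.2 (hrow i)
        _ = r := Finset.card_range r
  | b =>
    refine le_trans ?_ (le_max_right _ _)
    rw [mul_comm]
    refine (Finset.card_le_mul_card_image (f := fun i : Fin n => i.val / r) S r ?_).trans ?_
    · intro a _
      calc _ ≤ (Finset.range r).card := by
            apply Finset.card_le_card_of_injOn (fun i : Fin n => i.val % r)
            · intro i _
              have := hrow i
              simp only [Finset.coe_range, Set.mem_Iio]
              exact Nat.mod_lt _ (lt_of_le_of_lt (Nat.zero_le _) this)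
            · intro i hi j hj hij
              simp only [Finset.coe_filter, Set.mem_ofPred_eq] at hi hj
              apply Fin.ext
              have h1 := Nat.div_add_mod i.val r
              have h2 := Nat.div_add_mod j.val r
              simp only at hij
              rw [← h1, ← h2, hi.2, hj.2, hij]
        _ = r := Finset.card_range r
    · gcongr
      by_contra hlt
      push Not at hlt
      obtain ⟨u, hu, v, hv, w, hw, h1, h2, h3⟩ := Finset.two_lt_card.1 hlt
      obtain ⟨u, ku, rfl⟩ := Finset.mem_image.1 hu
      obtain ⟨v, kv, rfl⟩ := Finset.mem_image.1 hv
      obtain ⟨w, kw, rfl⟩ := Finset.mem_image.1 hw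
      refine ht (F u) (F v) (F w) ?_ ?_ ?_
      · exact hcb _ _ h1 (hx _ ku _ kv (fun e => h1 (by rw [e])))
      · exact hcb _ _ h3 (hx _ kv _ kw (fun e => h3 (by rw [e])))
      · exact hcb _ _ h2 (hx _ ku _ kw (fun e => h2 (by rw [e])))

open Filter Asymptotics in
lemma eventually_t : ∃ t0 : ℕ, ∀ t : ℕ, t0 ≤ t → 40 ≤ t ∧ 1 ≤ Real.log t ∧
    (8000000 * Real.log t) ^ 2 ≤ t ∧ 40 * (t:ℝ) ^ 7 ≤ 2 ^ t := by
  rw [← Filter.eventually_atTop]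
  have h1 : ∀ᶠ t : ℕ in atTop, 40 ≤ t := eventually_ge_atTop 40
  have h2 : ∀ᶠ t : ℕ in atTop, 1 ≤ Real.log t :=
    (Real.tendsto_log_atTop.comp tendsto_natCast_atTop_atTop).eventually_ge_atTop 1
  have h3 : ∀ᶠ t : ℕ in atTop, (8000000 * Real.log t) ^ 2 ≤ (t:ℝ) := by
    have := (isLittleO_log_rpow_atTop (r := 1/2) (by norm_num)).bound
      (c := 1/8000000) (by norm_num)
    filter_upwards [tendsto_natCast_atTop_atTop.eventually this, h1, h2] with t ht h1 h2
    rw [Real.norm_of_nonneg (by linarith), Real.norm_of_nonneg (by positivity)] at ht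
    rw [← Real.sqrt_eq_rpow] at ht
    have : 8000000 * Real.log t ≤ √t := by linarith
    calc _ ≤ (√(t:ℝ)) ^ 2 := pow_le_pow_left₀ (by linarith) this 2
      _ = t := Real.sq_sqrt (by positivity)
  have h4 : ∀ᶠ t : ℕ in atTop, 40 * (t:ℝ) ^ 7 ≤ 2 ^ t := by
    have := (isLittleO_pow_const_const_pow_of_one_lt (R := ℝ) 7 (r := 2) (by norm_num)).bound
      (c := 1/40) (by norm_num)
    filter_upwards [this] with t ht
    rw [Real.norm_of_nonneg (by positivity), Real.norm_of_nonneg (by positivity)] at ht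
    linarith
  filter_upwards [h1, h2, h3, h4] with t a b c d using ⟨a, b, c, d⟩

theorem upper : ∃ n0 : ℕ, ∀ n : ℕ, n0 ≤ n → ∃ c : Coloring n, Avoids c {Prrr} ∧
    (h2 c : ℝ) ≤ 2000000000 * Real.sqrt (n * Real.logb 2 n) := by
  obtain ⟨t0, ht0⟩ := eventually_t
  refine ⟨max (t0 ^ 8) 3, fun n hn => ?_⟩
  have hn3 : 3 ≤ n := le_trans (le_max_right _ _) hn
  have hn8 : t0 ^ 8 ≤ n := le_trans (le_max_left _ _) hn
  have hn3R : (3:ℝ) ≤ n := by exact_mod_cast hn3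
  set y : ℝ := (n:ℝ) ^ (1/8 : ℝ) with hy
  have hy8 : y ^ 8 = n := by
    rw [hy, ← Real.rpow_natCast, ← Real.rpow_mul (by positivity)]; norm_num
  have hy1 : 1 ≤ y := Real.one_le_rpow (by linarith) (by norm_num)
  clear_value y
  set t : ℕ := ⌈y⌉₊ with ht
  have hyt : y ≤ t := Nat.le_ceil y
  have hty : (t:ℝ) ≤ 2 * y := by
    have := Nat.ceil_lt_add_one (by linarith : 0 ≤ y)
    rw [← ht] at this
    linarith
  clear_value t
  have hnt : n ≤ t ^ 8 := by
    have : (n:ℝ) ≤ (t:ℝ) ^ 8 := by rw [← hy8]; gcongr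
    exact_mod_cast this
  have ht0t : t0 ≤ t := by
    by_contra h
    push Not at h
    have := Nat.pow_lt_pow_left h (by norm_num : 8 ≠ 0)
    omega
  obtain ⟨a1, a2, a3, a4⟩ := ht0 t ht0t
  have htn : (t:ℝ) ≤ n := by
    have hyy : 2 ≤ y := by
      have : (40:ℝ) ≤ t := by exact_mod_cast a1
      linarith
    calc (t:ℝ) ≤ 2 * y := hty
      _ ≤ y * y := by gcongr
      _ = y ^ 2 := by ring
      _ ≤ y ^ 8 := pow_le_pow_right₀ hy1 (by norm_num)
      _ = n := hy8
  have htpos : (0:ℝ) < t := by linarith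
  have hlogtn : Real.log t ≤ Real.log n := Real.log_le_log htpos htn
  have hlogn : Real.log n ≤ Real.logb 2 n := by
    unfold Real.logb
    rw [le_div_iff₀ (Real.log_pos (by norm_num))]
    have : Real.log 2 ≤ 1 := by
      have := Real.log_two_lt_d9
      linarith
    nlinarith
  set lam := Real.log t
  set B := Real.logb 2 n
  set a : ℝ := (t:ℝ) ^ 4 * √lam with ha
  have hsl : 1 ≤ √lam := Real.one_le_sqrt.2 a2
  have ht1 : (1:ℝ) ≤ (t:ℝ) ^ 4 := one_le_pow₀ (by linarith)
  have ha1 : 1 ≤ a := by nlinarith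
  have ha2 : a ^ 2 = (t:ℝ) ^ 8 * lam := by
    rw [ha, mul_pow, Real.sq_sqrt (by linarith)]; ring
  clear_value a
  set g : ℕ := ⌈a⌉₊ with hg
  have hag : a ≤ g := Nat.le_ceil a
  have hga : (g:ℝ) ≤ 2 * a := by
    have := Nat.ceil_lt_add_one (by linarith : 0 ≤ a)
    rw [← hg] at this
    linarith
  clear_value g
  obtain ⟨V, hV, G, hG1, hG2, hG3⟩ := main_graph t g a1 a2 a3 a4
    (by rw [← ha2]; gcongr) (by
      calc (g:ℝ) ^ 2 ≤ (2 * a) ^ 2 := by gcongr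
        _ = 4 * a ^ 2 := by ring
        _ = _ := by rw [ha2]; ring)
  obtain ⟨c, hc1, hc2⟩ := colour_of_graph n (60000000 * g) (Nat.sqrt n + 1)
    (Nat.lt_succ_sqrt n).le V (hnt.trans hV) G hG1 hG2 hG3
  refine ⟨c, hc1, ?_⟩
  have hsq : √(n:ℝ) = y ^ 4 := by
    rw [← hy8, show y ^ 8 = (y ^ 4) ^ 2 by ring, Real.sqrt_sq (by positivity)]
  have hB1 : lam ≤ B := hlogtn.trans hlogn
  have hs0 : 1 ≤ √(n:ℝ) := Real.one_le_sqrt.2 (by linarith)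
  have hsB : 1 ≤ √B := Real.one_le_sqrt.2 (a2.trans hB1)
  have hspl : √((n:ℝ) * B) = √(n:ℝ) * √B := Real.sqrt_mul (by positivity) _
  have h1 : (h2 c : ℝ) ≤ max (60000000 * (g:ℝ)) (2 * ((Nat.sqrt n : ℝ) + 1)) := by
    exact_mod_cast hc2
  rw [hspl]
  refine h1.trans (max_le ?_ ?_)
  · calc 60000000 * (g:ℝ) ≤ 60000000 * (2 * a) := by gcongr
      _ = 120000000 * ((t:ℝ) ^ 4 * √lam) := by rw [ha]; ring
      _ ≤ 120000000 * ((2 * y) ^ 4 * √B) := by gcongr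
      _ = 1920000000 * (y ^ 4 * √B) := by ring
      _ ≤ 2000000000 * (√(n:ℝ) * √B) := by rw [hsq]; gcongr; norm_num
  · have : (Nat.sqrt n : ℝ) ≤ √(n:ℝ) := Real.nat_sqrt_le_real_sqrt
    have h5 : √(n:ℝ) * 1 ≤ √(n:ℝ) * √B := by gcongr
    linarith

end R3

namespace R3
open Finset
open scoped Classical

lemma two_mul_sum_card_powerset {α : Type} (A : Finset α) :
    2 * ∑ B ∈ A.powerset, (B.card : ℝ) = A.card * 2 ^ A.card := by
  have h : ∑ B ∈ A.powerset, (B.card : ℝ) = ∑ B ∈ A.powerset, ((A \ B).card : ℝ) := by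
    refine Finset.sum_nbij' (fun B => A \ B) (fun B => A \ B) ?_ ?_ ?_ ?_ ?_
    · intro B _; simp
    · intro B _; simp
    · intro B hB
      simp [Finset.inter_eq_right.2 (Finset.mem_powerset.1 hB)]
    · intro B hB
      simp [Finset.inter_eq_right.2 (Finset.mem_powerset.1 hB)]
    · intro B hB
      simp [Finset.inter_eq_right.2 (Finset.mem_powerset.1 hB)]
  calc 2 * ∑ B ∈ A.powerset, (B.card : ℝ)
      = ∑ B ∈ A.powerset, (B.card : ℝ) + ∑ B ∈ A.powerset, ((A \ B).card : ℝ) := by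
        rw [← h]; ring
    _ = ∑ B ∈ A.powerset, (A.card : ℝ) := by
        rw [← Finset.sum_add_distrib]
        refine Finset.sum_congr rfl fun B hB => ?_
        have := Finset.card_sdiff_add_card_eq_card (Finset.mem_powerset.1 hB)
        rw [← this]; push_cast; ring
    _ = _ := by
        rw [Finset.sum_const, Finset.card_powerset, nsmul_eq_mul]; push_cast; ring

lemma completion_num {d : ℝ} (hd : 1 ≤ d) (x : ℕ) :
    Real.logb 2 d / 8 * (2 ^ x + 1) ≤ d + x * 2 ^ x / 2 := by
  set L := Real.logb 2 d with hL
  have hL0 : 0 ≤ L := Real.logb_nonneg (by norm_num) hd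
  have hx1 : (1:ℝ) ≤ 2 ^ x := one_le_pow₀ (by norm_num)
  rcases le_or_gt L (2 * x) with h | h
  · have : L / 8 * (2 ^ x + 1) ≤ (2 * x) / 8 * (2 ^ x + 2 ^ x) := by gcongr
    calc _ ≤ _ := this
      _ = x * 2 ^ x / 2 := by ring
      _ ≤ _ := by linarith
  · have h1 : (2:ℝ) ^ x ≤ √d := by
      apply Real.le_sqrt_of_sq_le
      rw [← pow_mul, ← Real.rpow_natCast]
      calc (2:ℝ) ^ ((x * 2 : ℕ) : ℝ) ≤ 2 ^ L := by
            apply Real.rpow_le_rpow_of_exponent_le (by norm_num)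
            push_cast; linarith
        _ = d := Real.rpow_logb (by norm_num) (by norm_num) (by linarith)
    have hs : 1 ≤ √d := Real.one_le_sqrt.2 hd
    have h2 : L ≤ 4 * √d := by
      have e : L = 2 * (Real.log √d) / Real.log 2 := by
        rw [hL, Real.logb, Real.log_sqrt (by linarith)]; ring
      have l2 := Real.log_two_gt_d9
      have l3 := Real.log_le_sub_one_of_pos (by linarith : 0 < √d)
      rw [e, div_le_iff₀ (by linarith)]
      nlinarith
    have hdd : √d * √d = d := Real.mul_self_sqrt (by linarith)
    have : L / 8 * (2 ^ x + 1) ≤ (4 * √d) / 8 * (√d + √d) := by gcongr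
    have h3 : (0:ℝ) ≤ x * 2 ^ x / 2 := by positivity
    calc _ ≤ _ := this
      _ = √d * √d := by ring
      _ = d := hdd
      _ ≤ _ := by linarith

section
variable {V : Type} [Fintype V] (R : V → V → Prop)

/-- neighbourhood -/
noncomputable def nb (v : V) : Finset V := univ.filter (R v)

/-- independent sets -/
noncomputable def inds : Finset (Finset V) := univ.filter fun W => ∀ i ∈ W, ∀ j ∈ W, ¬ R i j

variable {R}

lemma fibre_bound (hs : ∀ u w, R u w → R w u) (hir : ∀ u, ¬ R u u)
    (ht : ∀ u v w, R u v → R v w → R u w → False) {d : ℝ} (hd : 1 ≤ d) (v : V)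
    (T : Finset V) (hT : T ∈ (inds R).image fun W => W \ insert v (nb R v)) :
    0 ≤ ∑ W ∈ (inds R).filter (fun W => W \ insert v (nb R v) = T),
      ((if v ∈ W then d else 0) + ((nb R v ∩ W).card : ℝ) - Real.logb 2 d / 8) := by
  obtain ⟨W0, hW0, hWT⟩ := Finset.mem_image.1 hT
  simp only [inds, Finset.mem_filter, Finset.mem_univ, true_and] at hW0
  have hTind : ∀ i ∈ T, ∀ j ∈ T, ¬ R i j := by
    intro i hi j hj
    rw [← hWT] at hi hj
    exact hW0 i (Finset.mem_sdiff.1 hi).1 j (Finset.mem_sdiff.1 hj).1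
  have hTv : v ∉ T := by
    rw [← hWT]; simp
  have hTn : ∀ i ∈ T, ¬ R v i := by
    intro i hi
    rw [← hWT] at hi
    simp [nb] at hi
    tauto
  have hTn' : ∀ i ∈ T, ¬ R i v := fun i hi h => hTn i hi (hs _ _ h)
  set A : Finset V := (nb R v).filter fun a => ∀ i ∈ T, ¬ R a i with hA
  have hAm : ∀ a, a ∈ A ↔ R v a ∧ ∀ i ∈ T, ¬ R a i := by
    intro a; simp [hA, nb]
  have hvA : v ∉ A := fun h => hir v ((hAm v).1 h).1
  have hAT : ∀ a ∈ A, a ∉ T := fun a ha hT => hTn a hT ((hAm a).1 ha).1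
  have hfib : (inds R).filter (fun W => W \ insert v (nb R v) = T) =
      insert (insert v T) (A.powerset.image fun B => T ∪ B) := by
    ext W
    simp only [inds, Finset.mem_filter, Finset.mem_univ, true_and, Finset.mem_insert,
      Finset.mem_image, Finset.mem_powerset]
    constructor
    · rintro ⟨hW, hWe⟩
      have hmem : ∀ i, i ∈ T ↔ i ∈ W ∧ i ≠ v ∧ ¬ R v i := by
        intro i; rw [← hWe]; simp [nb]
      by_cases hv : v ∈ W
      · left
        ext i
        rw [Finset.mem_insert, hmem]
        constructor
        · intro hi
          by_cases hiv : i = v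
          · exact Or.inl hiv
          · exact Or.inr ⟨hi, hiv, hW v hv i hi⟩
        · rintro (rfl | h)
          · exact hv
          · exact h.1
      · right
        refine ⟨W.filter (R v), ?_, ?_⟩
        · intro a ha
          rw [Finset.mem_filter] at ha
          rw [hAm]
          exact ⟨ha.2, fun i hi => hW a ha.1 i ((hmem i).1 hi).1⟩
        · ext i
          rw [Finset.mem_union, hmem, Finset.mem_filter]
          constructor
          · rintro (h | h)
            · exact h.1
            · exact h.1
          · intro hi
            by_cases hR : R v i
            · exact Or.inr ⟨hi, hR⟩
            · exact Or.inl ⟨hi, fun e => hv (e ▸ hi), hR⟩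
    · rintro (rfl | ⟨B, hB, rfl⟩)
      · constructor
        · intro i hi j hj
          rw [Finset.mem_insert] at hi hj
          rcases hi with rfl | hi <;> rcases hj with rfl | hj
          · exact hir _
          · exact hTn _ hj
          · exact hTn' _ hi
          · exact hTind _ hi _ hj
        · ext i
          simp only [Finset.mem_sdiff, Finset.mem_insert, nb, Finset.mem_filter, Finset.mem_univ,
            true_and]
          constructor
          · tauto
          · intro hi
            refine ⟨Or.inr hi, ?_⟩
            rintro (rfl | h)
            · exact hTv hi
            · exact hTn i hi h
      · constructor
        · intro i hi j hj
          rw [Finset.mem_union] at hi hj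
          rcases hi with hi | hi <;> rcases hj with hj | hj
          · exact hTind _ hi _ hj
          · exact fun h => ((hAm j).1 (hB hj)).2 i hi (hs _ _ h)
          · exact ((hAm i).1 (hB hi)).2 j hj
          · exact fun h => ht v i j ((hAm i).1 (hB hi)).1 h ((hAm j).1 (hB hj)).1
        · ext i
          simp only [Finset.mem_sdiff, Finset.mem_insert, nb, Finset.mem_filter, Finset.mem_univ,
            true_and, Finset.mem_union]
          constructor
          · rintro ⟨hi | hi, h⟩
            · exact hi
            · exact absurd (Or.inr ((hAm i).1 (hB hi)).1) h
          · intro hi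
            refine ⟨Or.inl hi, ?_⟩
            rintro (rfl | h)
            · exact hTv hi
            · exact hTn i hi h
  rw [hfib, Finset.sum_insert, Finset.sum_image]
  · have e1 : (if v ∈ insert v T then d else 0) = d := by simp
    have e2 : ∀ B ∈ A.powerset, (if v ∈ T ∪ B then d else 0) +
        ((nb R v ∩ (T ∪ B)).card : ℝ) - Real.logb 2 d / 8 = B.card - Real.logb 2 d / 8 := by
      intro B hB
      rw [Finset.mem_powerset] at hB
      have h1 : v ∉ T ∪ B := by
        rw [Finset.mem_union]; rintro (h | h)
        · exact hTv h
        · exact hvA (hB h)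
      have h2 : nb R v ∩ (T ∪ B) = B := by
        ext i
        simp only [nb, Finset.mem_inter, Finset.mem_filter, Finset.mem_univ, true_and,
          Finset.mem_union]
        constructor
        · rintro ⟨h, h' | h'⟩
          · exact absurd h (hTn i h')
          · exact h'
        · intro h
          exact ⟨((hAm i).1 (hB h)).1, Or.inr h⟩
      rw [if_neg h1, h2]; ring
    rw [e1, Finset.sum_congr rfl e2, Finset.sum_sub_distrib, Finset.sum_const,
      Finset.card_powerset, nsmul_eq_mul]
    have := completion_num hd A.card
    have h2 := two_mul_sum_card_powerset A
    have h3 : (0:ℝ) ≤ ((nb R v ∩ insert v T).card : ℝ) := by positivity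
    push_cast
    linarith
  · intro B hB C hC h
    simp only [Finset.coe_powerset, Set.mem_preimage, Set.mem_powerset_iff,
      Finset.coe_subset] at hB hC
    simp only at h
    ext i
    constructor
    · intro hi
      have : i ∈ T ∪ C := h ▸ Finset.mem_union_right _ hi
      exact (Finset.mem_union.1 this).resolve_left (hAT i (hB hi))
    · intro hi
      have : i ∈ T ∪ B := h ▸ Finset.mem_union_right _ hi
      exact (Finset.mem_union.1 this).resolve_left (hAT i (hC hi))
  · rw [Finset.mem_image]
    rintro ⟨B, hB, h⟩
    rw [Finset.mem_powerset] at hB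
    have : v ∈ T ∪ B := by rw [h]; simp
    rcases Finset.mem_union.1 this with h | h
    · exact hTv h
    · exact hvA (hB h)

lemma vertex_bound (hs : ∀ u w, R u w → R w u) (hir : ∀ u, ¬ R u u)
    (ht : ∀ u v w, R u v → R v w → R u w → False) {d : ℝ} (hd : 1 ≤ d) (v : V) :
    0 ≤ ∑ W ∈ inds R,
      ((if v ∈ W then d else 0) + ((nb R v ∩ W).card : ℝ) - Real.logb 2 d / 8) := by
  rw [← Finset.sum_fiberwise_of_maps_to (s := inds R)
    (t := (inds R).image fun W => W \ insert v (nb R v))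
    (g := fun W => W \ insert v (nb R v)) (fun W hW => Finset.mem_image_of_mem _ hW)]
  exact Finset.sum_nonneg fun T hT => fibre_bound hs hir ht hd v T hT

theorem shearer (hs : ∀ u w, R u w → R w u) (hir : ∀ u, ¬ R u u)
    (ht : ∀ u v w, R u v → R v w → R u w → False) {d : ℝ} (hd : 1 ≤ d)
    (hdeg : ∀ v, ((nb R v).card : ℝ) ≤ d) :
    ∃ W : Finset V, (∀ i ∈ W, ∀ j ∈ W, ¬ R i j) ∧
      Fintype.card V * (Real.logb 2 d / 8) ≤ 2 * d * W.card := by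
  have h1 : 0 ≤ ∑ W ∈ inds R, ∑ v : V,
      ((if v ∈ W then d else 0) + ((nb R v ∩ W).card : ℝ) - Real.logb 2 d / 8) := by
    rw [Finset.sum_comm]
    exact Finset.sum_nonneg fun v _ => vertex_bound hs hir ht hd v
  have hne : (inds R).Nonempty := ⟨∅, by simp [inds]⟩
  have : ∃ W ∈ inds R, 0 ≤ ∑ v : V,
      ((if v ∈ W then d else 0) + ((nb R v ∩ W).card : ℝ) - Real.logb 2 d / 8) := by
    by_contra hcon
    push Not at hcon
    exact absurd (Finset.sum_neg hcon hne) (not_lt.2 h1)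
  obtain ⟨W, hW, h⟩ := this
  refine ⟨W, by simpa [inds] using hW, ?_⟩
  rw [Finset.sum_sub_distrib, Finset.sum_add_distrib, Finset.sum_const, nsmul_eq_mul,
    Finset.card_univ] at h
  have e1 : ∑ v : V, (if v ∈ W then d else 0) = W.card * d := by
    rw [← Finset.sum_filter, Finset.sum_const, nsmul_eq_mul]; simp
  have e2 : ∑ v : V, ((nb R v ∩ W).card : ℝ) ≤ W.card * d := by
    have : ∀ v : V, ((nb R v ∩ W).card : ℝ) = ∑ w ∈ W, if R w v then 1 else 0 := by
      intro v
      rw [Finset.sum_boole]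
      congr 2
      ext i
      simp only [nb, Finset.mem_inter, Finset.mem_filter, Finset.mem_univ, true_and]
      exact ⟨fun h => ⟨h.2, hs _ _ h.1⟩, fun h => ⟨hs _ _ h.2, h.1⟩⟩
    simp_rw [this]
    rw [Finset.sum_comm]
    calc _ ≤ ∑ w ∈ W, d := by
          refine Finset.sum_le_sum fun w _ => ?_
          rw [Finset.sum_boole]
          exact hdeg w
      _ = _ := by rw [Finset.sum_const, nsmul_eq_mul]
  rw [e1] at h
  linarith

end

theorem lower (n : ℕ) (hn : 2 ≤ n) (c : Coloring n) (hc : Avoids c {Prrr}) :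
    1/32 * Real.sqrt (n * Real.logb 2 n) ≤ h2 c := by
  have hnR : (2:ℝ) ≤ n := by exact_mod_cast hn
  set B := Real.logb 2 n with hB
  have hB1 : 1 ≤ B := by
    rw [hB, Real.le_logb_iff_rpow_le (by norm_num) (by linarith)]
    simpa using hnR
  set d := √((n:ℝ) * B) with hd
  have hdd : d * d = n * B := Real.mul_self_sqrt (by positivity)
  have hdn : √(n:ℝ) ≤ d := Real.sqrt_le_sqrt (by nlinarith)
  have hd1 : 1 ≤ d := (Real.one_le_sqrt.2 (by linarith)).trans hdn
  let R : Fin n → Fin n → Prop := fun i j => i ≠ j ∧ c.col i j = Col.r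
  have hs : ∀ u w, R u w → R w u := fun u w h => ⟨h.1.symm, by rw [c.symm]; exact h.2⟩
  have hir : ∀ u, ¬ R u u := fun u h => h.1 rfl
  have ht : ∀ u v w, R u v → R v w → R u w → False := fun u v w h1 h2 h3 =>
    of_avoids c hc u v w h1.1 h2.1 h3.1 h1.2 h2.2 h3.2
  have two : ∀ S : Finset (Fin n), (∀ i ∈ S, ∀ j ∈ S, ¬ R i j) → (S.card : ℝ) ≤ h2 c := by
    intro S hS
    have := le_h2 c S ⟨Col.r, fun i hi j hj hij h => hS i hi j hj ⟨hij, h⟩⟩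
    exact_mod_cast this
  by_cases hdeg : ∀ v, ((nb R v).card : ℝ) ≤ d
  · obtain ⟨W, hW, hWc⟩ := shearer hs hir ht hd1 hdeg
    refine le_trans ?_ (two W hW)
    rw [Fintype.card_fin] at hWc
    have hlog : B / 2 ≤ Real.logb 2 d := by
      calc B / 2 = Real.logb 2 (√(n:ℝ)) := by
            rw [hB, Real.logb, Real.logb, Real.log_sqrt (by linarith)]; ring
        _ ≤ _ := Real.logb_le_logb_of_le (by norm_num) (by positivity) hdn
    have : (n:ℝ) * (B / 2 / 8) ≤ 2 * d * W.card := by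
      refine le_trans ?_ hWc
      gcongr
    have h3 : d * d ≤ d * (32 * W.card) := by rw [hdd]; linarith
    have h4 := le_of_mul_le_mul_left h3 (by linarith)
    linarith
  · push Not at hdeg
    obtain ⟨v, hv⟩ := hdeg
    have := two (nb R v) (by
      intro i hi j hj h
      simp only [nb, Finset.mem_filter, Finset.mem_univ, true_and] at hi hj
      exact ht v i j hi h hj)
    linarith

end R3

theorem stmt1 :
    ∃ C1 C2 : ℝ, 0 < C1 ∧ 0 < C2 ∧ ∃ n0 : ℕ, ∀ n : ℕ, n0 ≤ n →
      C1 * Real.sqrt (n * Real.logb 2 n) ≤ (h2n n {Prrr} : ℝ) ∧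
      (h2n n {Prrr} : ℝ) ≤ C2 * Real.sqrt (n * Real.logb 2 n) := by
  obtain ⟨n0, h0⟩ := R3.upper
  refine ⟨1/32, 2000000000, by norm_num, by norm_num, max n0 2, fun n hn => ?_⟩
  obtain ⟨c, hc, hcb⟩ := h0 n (le_trans (le_max_left _ _) hn)
  constructor
  · have hne : {m | ∃ c : Coloring n, Avoids c {Prrr} ∧ h2 c = m}.Nonempty := ⟨_, c, hc, rfl⟩
    obtain ⟨c', hc', he⟩ := Nat.sInf_mem hne
    have : h2n n {Prrr} = h2 c' := he.symm
    rw [this]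
    exact R3.lower n (le_trans (le_max_right _ _) hn) c' hc'
  · refine le_trans ?_ hcb
    have : h2n n {Prrr} ≤ h2 c := Nat.sInf_le ⟨c, hc, rfl⟩
    exact_mod_cast this
end

section
/- For every positive integer n and for each of the four families H ∈ {{rrb, rry}, {rrb, bbr}, {rrb, bby}, {rry, bby}} of two triangle patterns, h_2(n, H) = ⌈√n⌉. -/
theorem pat_cases_s2 (A B C p q : Col) (hpq : q ≠ p)
    (h : ({A, B, C} : Multiset Col) = {p, p, q}) :
    (A = p ∧ B = p ∧ C = q) ∨ (A = p ∧ B = q ∧ C = p) ∨ (A = q ∧ B = p ∧ C = p) := by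
  revert hpq h
  cases A <;> cases B <;> cases C <;> cases p <;> cases q <;> decide

/-- A transitive color class contains no pattern `ppq`. -/
theorem not_contains {n : ℕ} (c : Coloring n) (p q : Col) (hpq : q ≠ p)
    (ht : ∀ u v w, c.col u v = p → c.col v w = p → c.col u w = p) :
    ¬ Contains c {p, p, q} := by
  rintro ⟨u, v, w, -, -, -, h⟩
  rcases pat_cases_s2 _ _ _ p q hpq h with ⟨h1, h2, h3⟩ | ⟨h1, h2, h3⟩ | ⟨h1, h2, h3⟩
  · exact hpq (h3.symm.trans (ht _ _ _ h1 h2))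
  · exact hpq (h2.symm.trans (ht v u w (by rw [c.symm, h1]) h3))
  · exact hpq (h1.symm.trans (ht u w v h3 (by rw [c.symm, h2])))

/-- Lower bound: avoiding `rrx` already forces `n ≤ h2 ^ 2`. -/
theorem lower_s2 {n : ℕ} (c : Coloring n) (x : Col) (hx : x ≠ Col.r)
    (h : ¬ Contains c {Col.r, Col.r, x}) : n ≤ h2 c * h2 c := by
  classical
  have hN : ∀ v : Fin n,
      (Finset.univ.filter (fun u => u = v ∨ c.col v u = Col.r)).card ≤ h2 c := by
    intro v
    apply le_h2
    refine ⟨x, ?_⟩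
    intro i hi j hj hij hc
    simp only [Finset.mem_filter, Finset.mem_univ, true_and] at hi hj
    by_cases hiv : i = v
    · subst hiv
      rcases hj with hj | hj
      · exact hij hj.symm
      · exact hx (hc.symm.trans hj)
    by_cases hjv : j = v
    · subst hjv
      rcases hi with hi | hi
      · exact hij hi
      · exact hx (hc.symm.trans ((c.symm _ _).trans hi))
    have hi' := hi.resolve_left hiv
    have hj' := hj.resolve_left hjv
    refine h ⟨i, v, j, hiv, fun e => hjv e.symm, hij, ?_⟩
    simp only [triPattern]
    rw [c.symm i v, hi', hj', hc]
  let F : Finset (Finset (Fin n)) := Finset.univ.filter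
    (fun S => ∀ i ∈ S, ∀ j ∈ S, i ≠ j → c.col i j ≠ Col.r)
  obtain ⟨S, hSF, hmax⟩ := Finset.exists_max_image F Finset.card ⟨∅, by simp [F]⟩
  have hS : ∀ i ∈ S, ∀ j ∈ S, i ≠ j → c.col i j ≠ Col.r := by simpa [F] using hSF
  have hcov : (Finset.univ : Finset (Fin n)) ⊆
      S.biUnion (fun v => Finset.univ.filter (fun u => u = v ∨ c.col v u = Col.r)) := by
    intro u _
    by_contra hu
    simp only [Finset.mem_biUnion, Finset.mem_filter, Finset.mem_univ, true_and, not_exists,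
      not_and, not_or] at hu
    have huS : u ∉ S := fun h' => (hu u h').1 rfl
    have hmem : insert u S ∈ F := by
      simp only [F, Finset.mem_filter, Finset.mem_univ, true_and]
      intro i hi j hj hij
      rcases Finset.mem_insert.1 hi with rfl | hi2
      · rcases Finset.mem_insert.1 hj with rfl | hj
        · exact absurd rfl hij
        · rw [c.symm]; exact (hu j hj).2
      · rcases Finset.mem_insert.1 hj with rfl | hj
        · exact (hu i hi2).2
        · exact hS i hi2 j hj hij
    have := hmax _ hmem
    rw [Finset.card_insert_of_notMem huS] at this
    omega
  have h1 := Finset.card_le_card hcov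
  have h2' := Finset.card_biUnion_le_card_mul S _ (h2 c) (fun v _ => hN v)
  have h3 : S.card ≤ h2 c := le_h2 c S ⟨Col.r, hS⟩
  simp only [Finset.card_univ, Fintype.card_fin] at h1
  exact h1.trans (h2'.trans (Nat.mul_le_mul_right _ h3))

/-- The grid coloring: rows are red, columns are blue, everything else is yellow. -/
def gridCol (n k : ℕ) : Coloring n where
  col i j := if i.val / k = j.val / k then Col.r
    else if i.val % k = j.val % k then Col.b else Col.y
  symm i j := by simp only [eq_comm]

theorem grid_r (n k : ℕ) (u v : Fin n) :
    (gridCol n k).col u v = Col.r ↔ u.val / k = v.val / k := by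
  simp only [gridCol]; split_ifs <;> simp_all

theorem grid_b (n k : ℕ) (u v : Fin n) :
    (gridCol n k).col u v = Col.b ↔ (u = v → False) ∧ u.val % k = v.val % k := by
  have key : u.val / k = v.val / k → u.val % k = v.val % k → u = v := by
    intro h1 h2
    apply Fin.ext
    rw [← Nat.div_add_mod u.val k, ← Nat.div_add_mod v.val k, h1, h2]
  simp only [gridCol]
  split_ifs with h1 h2
  · simp only [reduceCtorEq, false_iff, not_and]
    exact fun h h3 => h (key h1 h3)
  · simp only [true_iff]
    exact ⟨fun e => h1 (by rw [e]), h2⟩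
  · simp [h2]

theorem grid_h2 (n k : ℕ) (hk : 0 < k) (hn : n ≤ k * k) : h2 (gridCol n k) ≤ k := by
  have big : ∀ (S : Finset (Fin n)) (f : Fin n → ℕ), (∀ i, f i < k) →
      (∀ i ∈ S, ∀ j ∈ S, f i = f j → i = j) → S.card ≤ k := by
    intro S f hf hinj
    have := Finset.card_le_card_of_injOn (s := S) (t := Finset.range k) f
      (fun i _ => by simpa using hf i) (fun i hi j hj h => hinj i hi j hj h)
    simpa using this
  refine csSup_le ⟨0, ∅, ⟨Col.r, by simp⟩, rfl⟩ ?_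
  rintro m ⟨S, ⟨x, hx⟩, rfl⟩
  have hdiv : ∀ i : Fin n, i.val / k < k := fun i =>
    Nat.div_lt_of_lt_mul (lt_of_lt_of_le i.2 hn)
  cases x with
  | r =>
    refine big S (fun i => i.val / k) hdiv ?_
    intro i hi j hj h
    by_contra hij
    exact hx i hi j hj hij ((grid_r n k i j).2 h)
  | b =>
    refine big S (fun i => i.val % k) (fun i => Nat.mod_lt _ hk) ?_
    intro i hi j hj h
    by_contra hij
    exact hx i hi j hj hij ((grid_b n k i j).2 ⟨hij, h⟩)
  | y =>
    refine big S (fun i => (i.val / k + i.val % k) % k) (fun i => Nat.mod_lt _ hk) ?_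
    intro i hi j hj h
    by_contra hij
    have hne := hx i hi j hj hij
    change (i.val / k + i.val % k) ≡ (j.val / k + j.val % k) [MOD k] at h
    have hdm : i.val / k = j.val / k ∧ i.val % k = j.val % k := by
      by_cases h1 : i.val / k = j.val / k
      · refine ⟨h1, ?_⟩
        rw [h1] at h
        exact Nat.ModEq.eq_of_lt_of_lt (Nat.ModEq.add_left_cancel' _ h)
          (Nat.mod_lt _ hk) (Nat.mod_lt _ hk)
      · by_cases h2 : i.val % k = j.val % k
        · rw [h2] at h
          exact ⟨Nat.ModEq.eq_of_lt_of_lt (Nat.ModEq.add_right_cancel' _ h)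
            (hdiv i) (hdiv j), h2⟩
        · exact absurd (by simp [gridCol, h1, h2]) hne
    apply hij
    apply Fin.ext
    rw [← Nat.div_add_mod i.val k, ← Nat.div_add_mod j.val k, hdm.1, hdm.2]

theorem grid_not_r (n k : ℕ) (q : Col) (hq : q ≠ Col.r) :
    ¬ Contains (gridCol n k) {Col.r, Col.r, q} := by
  apply not_contains _ _ _ hq
  intro u v w
  simp only [grid_r]
  exact Eq.trans

theorem grid_not_b (n k : ℕ) (q : Col) (hq : q ≠ Col.b) :
    ¬ Contains (gridCol n k) {Col.b, Col.b, q} := by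
  rintro ⟨u, v, w, h1, h2, h3, h⟩
  rcases pat_cases_s2 _ _ _ _ q hq h with ⟨a1, a2, a3⟩ | ⟨a1, a2, a3⟩ | ⟨a1, a2, a3⟩
  · rw [grid_b] at a1 a2
    exact hq (a3.symm.trans ((grid_b n k u w).2 ⟨h3, a1.2.trans a2.2⟩))
  · rw [grid_b] at a1 a3
    exact hq (a2.symm.trans ((grid_b n k v w).2 ⟨h2, a1.2.symm.trans a3.2⟩))
  · rw [grid_b] at a2 a3
    exact hq (a1.symm.trans ((grid_b n k u v).2 ⟨h1, a3.2.trans a2.2.symm⟩))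

theorem main_family (n : ℕ) (hn : 0 < n) (H : Set (Multiset Col)) (x : Col) (hx : x ≠ Col.r)
    (hH : ({Col.r, Col.r, x} : Multiset Col) ∈ H)
    (hg : ∀ k, Avoids (gridCol n k) H) : h2n n H = ⌈Real.sqrt n⌉₊ := by
  have low : ∀ c : Coloring n, Avoids c H → ⌈Real.sqrt n⌉₊ ≤ h2 c := by
    intro c hc
    have := lower_s2 c x hx (hc _ hH)
    rw [Nat.ceil_le, Real.sqrt_le_left (Nat.cast_nonneg _), sq]
    exact_mod_cast this
  have hk : 0 < ⌈Real.sqrt n⌉₊ := by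
    rw [Nat.ceil_pos]
    exact Real.sqrt_pos.2 (by exact_mod_cast hn)
  have hnk : n ≤ ⌈Real.sqrt n⌉₊ * ⌈Real.sqrt n⌉₊ := by
    have := Nat.le_ceil (Real.sqrt n)
    rw [Real.sqrt_le_left (Nat.cast_nonneg _), sq] at this
    exact_mod_cast this
  apply le_antisymm
  · refine le_trans ?_ (grid_h2 n _ hk hnk)
    exact Nat.sInf_le ⟨gridCol n _, hg _, rfl⟩
  · refine le_csInf ⟨_, gridCol n 0, hg _, rfl⟩ ?_
    rintro m ⟨c, hc, rfl⟩
    exact low c hc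

theorem stmt2 (n : ℕ) (hn : 0 < n) :
    h2n n {Prrb, Prry} = ⌈Real.sqrt n⌉₊ ∧
    h2n n {Prrb, Pbbr} = ⌈Real.sqrt n⌉₊ ∧
    h2n n {Prrb, Pbby} = ⌈Real.sqrt n⌉₊ ∧
    h2n n {Prry, Pbby} = ⌈Real.sqrt n⌉₊ := by
  have a1 : ∀ k, ¬ Contains (gridCol n k) Prrb := fun k => grid_not_r n k Col.b (by decide)
  have a2 : ∀ k, ¬ Contains (gridCol n k) Prry := fun k => grid_not_r n k Col.y (by decide)
  have a3 : ∀ k, ¬ Contains (gridCol n k) Pbbr := fun k => grid_not_b n k Col.r (by decide)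
  have a4 : ∀ k, ¬ Contains (gridCol n k) Pbby := fun k => grid_not_b n k Col.y (by decide)
  refine ⟨main_family n hn _ Col.b (by decide) (Or.inl rfl) ?_,
    main_family n hn _ Col.b (by decide) (Or.inl rfl) ?_,
    main_family n hn _ Col.b (by decide) (Or.inl rfl) ?_,
    main_family n hn _ Col.y (by decide) (Or.inl rfl) ?_⟩
  all_goals
    rintro k P (rfl | rfl)
    all_goals first
      | exact a1 k
      | exact a2 k
      | exact a3 k
      | exact a4 k
end
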